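/- Let p_i, p_j, p_k be distinct odd primes and M = p_i^2 p_j^2 p_k^2. Assume A ⊕ B = ℤ_M, |A| = |B| = p_i p_j p_k, Φ_M | A, and that for every a ∈ A the set A ∩ Λ(a, D(M)) is M-fibered in at least one of the three directions. Define I = {a ∈ A : a∗F_i ⊆ A}, J = {a ∈ A : a∗F_j ⊆ A}, K = {a ∈ A : a∗F_k ⊆ A}, and assume I, J, K are pairwise disjoint. Then at least one of the sets I, J, K is empty. -/

import Mathlib

open Polynomial

/-- The mask polynomial `A(X) = Σ_{a ∈ A} X^a` of a finite subset of `ZMod M`,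
using the representatives in `{0, …, M-1}`. -/
noncomputable def maskPoly (M : ℕ) (A : Finset (ZMod M)) : Polynomial ℤ :=
  ∑ a ∈ A, X ^ a.val

/-- `Φ_s | A` : the `s`-th cyclotomic polynomial divides the mask polynomial of `A` in `ℤ[X]`. -/
def cycDvd (M s : ℕ) (A : Finset (ZMod M)) : Prop :=
  cyclotomic s ℤ ∣ maskPoly M A

/-- `A ⊕ B = ℤ_M` : every element of `ℤ_M` has a unique representation `a + b`
with `a ∈ A` and `b ∈ B`. -/
def IsTiling (M : ℕ) (A B : Set (ZMod M)) : Prop :=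
  ∀ z : ZMod M, ∃! ab : ZMod M × ZMod M, ab.1 ∈ A ∧ ab.2 ∈ B ∧ ab.1 + ab.2 = z

/-- The Coven–Meyerowitz property (T2): whenever `s_1, …, s_m` are prime powers dividing `M`,
powers of pairwise distinct primes, with `Φ_{s_t} | A` for each `t`, then `Φ_{s_1 ⋯ s_m} | A`. -/
def SatisfiesT2 (M : ℕ) (A : Finset (ZMod M)) : Prop :=
  ∀ (P : Finset ℕ) (e : ℕ → ℕ), P.Nonempty →
    (∀ p ∈ P, p.Prime ∧ 1 ≤ e p ∧ p ^ e p ∣ M ∧ cycDvd M (p ^ e p) A) →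
    cycDvd M (∏ p ∈ P, p ^ e p) A

/-- The `D`-grid through `x` in `ZMod M` : `Λ(x, D) = {y : D ∣ y - x}`. -/
def gridSet (M : ℕ) (x : ZMod M) (D : ℕ) : Set (ZMod M) :=
  {y : ZMod M | (D : ZMod M) ∣ (y - x)}

/-- `S` is fibered in the `p` direction on scale `M`: every element of `S` has its whole
fiber `Λ(s, M/p)` contained in `S`. -/
def Fibered (M p : ℕ) (S : Set (ZMod M)) : Prop :=
  ∀ s ∈ S, gridSet M s (M / p) ⊆ S

/-- `Div_N(S)` : the set of values `(s - s', N) = gcd(s - s', N)` for `s, s' ∈ S`. -/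
def DivSet (M N : ℕ) (S : Set (ZMod M)) : Set ℕ :=
  {m : ℕ | ∃ s ∈ S, ∃ s' ∈ S, Nat.gcd (s - s').val N = m}


set_option linter.unusedSectionVars false
set_option linter.unusedDecidableInType false
set_option linter.unusedFintypeInType false

namespace TC

/-- mixed second differences vanish -/
def Alt {X Y : Type*} (f : X → Y → ℤ) : Prop :=
  ∀ a a' b b', f a b + f a' b' = f a b' + f a' b

theorem Alt.swap {X Y : Type*} {f : X → Y → ℤ} (h : Alt f) : Alt (fun y x => f x y) := by
  intro a a' b b'
  have := h b b' a a'
  simp only at *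
  linarith

theorem lined {X Y : Type*} {f : X → Y → ℤ} (h01 : ∀ a b, f a b = 0 ∨ f a b = 1) (h : Alt f) :
    (∀ a a' b, f a b = f a' b) ∨ (∀ a b b', f a b = f a b') := by
  by_contra hc
  push Not at hc
  obtain ⟨⟨a, a', b, hab⟩, c, d, d', hcd⟩ := hc
  have key : ∀ e, f a e = f a b ∧ f a' e = f a' b := by
    intro e
    have h1 := h a a' b e
    rcases h01 a b with h2 | h2 <;> rcases h01 a' b with h3 | h3 <;>
    rcases h01 a e with h4 | h4 <;> rcases h01 a' e with h5 | h5 <;> omega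
  have h1 := h a c d d'
  have h2 := key d
  have h3 := key d'
  apply hcd
  omega

theorem posline {X Y : Type*} [Fintype X] [Fintype Y] {f : X → Y → ℤ}
    (h0 : ∀ a b, 0 ≤ f a b) (h : Alt f) (a : X) (b : Y) (hab : f a b ≠ 0) :
    (∃ a, ∀ b, 0 < f a b) ∨ (∃ b, ∀ a, 0 < f a b) := by
  by_contra hc
  push Not at hc
  obtain ⟨h1, h2⟩ := hc
  obtain ⟨d, hd⟩ := h1 a
  obtain ⟨c, hc⟩ := h2 b
  have e1 := h a c b d
  have := h0 a b
  have := h0 a d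
  have := h0 c b
  have := h0 c d
  omega

theorem Alt.dvd {X Y : Type*} [Fintype X] {f : X → Y → ℤ} (h : Alt f) (b b' : Y) :
    (Fintype.card X : ℤ) ∣ (∑ a, f a b) - ∑ a, f a b' := by
  rw [← Finset.sum_sub_distrib]
  rcases isEmpty_or_nonempty X with hX | ⟨⟨a⟩⟩
  · simp
  · have : ∀ x ∈ Finset.univ, f x b - f x b' = f a b - f a b' := by
      intro x _
      have := h x a b b'
      omega
    rw [Finset.sum_congr rfl this]
    simp only [Finset.sum_const, Finset.card_univ, nsmul_eq_mul]
    exact dvd_mul_right _ _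

variable {P Q R : Type} [Fintype P] [Fintype Q] [Fintype R] [DecidableEq P] [DecidableEq Q]
  [DecidableEq R]

/-- test functions on one coordinate -/
def Tst {P : Type} [Fintype P] (n : ℕ) (φ : P × P → ℤ) : Prop :=
  match n with
  | 0 => ∀ y y', φ y = φ y'
  | 1 => (∀ x h h', φ (x, h) = φ (x, h')) ∧ ∑ y, φ y = 0
  | _ => ∀ x, ∑ h, φ (x, h) = 0

def Zr (s1 s2 s3 : ℕ) (F : P × P → Q × Q → R × R → ℤ) : Prop :=
  ∀ φ1 φ2 φ3, Tst s1 φ1 → Tst s2 φ2 → Tst s3 φ3 →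
    ∑ y1, φ1 y1 * ∑ y2, φ2 y2 * ∑ y3, φ3 y3 * F y1 y2 y3 = 0

theorem Zr.swap12 {s1 s2 s3 : ℕ} {F : P × P → Q × Q → R × R → ℤ} (h : Zr s1 s2 s3 F) :
    Zr s2 s1 s3 (fun y2 y1 y3 => F y1 y2 y3) := by
  intro φ1 φ2 φ3 h1 h2 h3
  rw [← h φ2 φ1 φ3 h2 h1 h3]
  simp only [Finset.mul_sum]
  rw [Finset.sum_comm]
  refine Finset.sum_congr rfl fun _ _ => Finset.sum_congr rfl fun _ _ =>
    Finset.sum_congr rfl fun _ _ => by ring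

theorem Zr.swap23 {s1 s2 s3 : ℕ} {F : P × P → Q × Q → R × R → ℤ} (h : Zr s1 s2 s3 F) :
    Zr s1 s3 s2 (fun y1 y3 y2 => F y1 y2 y3) := by
  intro φ1 φ2 φ3 h1 h2 h3
  rw [← h φ1 φ3 φ2 h1 h3 h2]
  simp only [Finset.mul_sum]
  refine Finset.sum_congr rfl fun _ _ => ?_
  rw [Finset.sum_comm]
  refine Finset.sum_congr rfl fun _ _ =>
    Finset.sum_congr rfl fun _ _ => by ring

/-- the four points `(y,y')` and `(z,z')` have the same valuation of differences -/
def Rel {P : Type} (y y' z z' : P × P) : Prop := (y.1 = y'.1 ↔ z.1 = z'.1) ∧ (y = y' ↔ z = z')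

structure Cfg (A B : P × P → Q × Q → R × R → ℤ) : Prop where
  A01 : ∀ y1 y2 y3, A y1 y2 y3 = 0 ∨ A y1 y2 y3 = 1
  B01 : ∀ y1 y2 y3, B y1 y2 y3 = 0 ∨ B y1 y2 y3 = 1
  cA : ∑ y1, ∑ y2, ∑ y3, A y1 y2 y3 = (Fintype.card P : ℤ) * Fintype.card Q * Fintype.card R
  cB : ∑ y1, ∑ y2, ∑ y3, B y1 y2 y3 = (Fintype.card P : ℤ) * Fintype.card Q * Fintype.card R
  pP : (Fintype.card P).Prime
  pQ : (Fintype.card Q).Prime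
  pR : (Fintype.card R).Prime
  p3 : 3 ≤ Fintype.card P
  q3 : 3 ≤ Fintype.card Q
  r3 : 3 ≤ Fintype.card R
  pq : Fintype.card P ≠ Fintype.card Q
  pr : Fintype.card P ≠ Fintype.card R
  qr : Fintype.card Q ≠ Fintype.card R
  dv : ∀ y1 y2 y3 y1' y2' y3' z1 z2 z3 z1' z2' z3', A y1 y2 y3 = 1 → A y1' y2' y3' = 1 →
    B z1 z2 z3 = 1 → B z1' z2' z3' = 1 → Rel y1 y1' z1 z1' → Rel y2 y2' z2 z2' →
    Rel y3 y3' z3 z3' → y1 = y1' ∧ y2 = y2' ∧ y3 = y3'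
  zr : ∀ s1 s2 s3, s1 ≤ 2 → s2 ≤ 2 → s3 ≤ 2 → (s1 ≠ 0 ∨ s2 ≠ 0 ∨ s3 ≠ 0) →
    Zr s1 s2 s3 A ∨ Zr s1 s2 s3 B
  gt : ∀ x1 x2 x3,
    (∀ h1 h2 h3, A (x1, h1) (x2, h2) (x3, h3) = 1 → ∀ h, A (x1, h) (x2, h2) (x3, h3) = 1) ∨
    (∀ h1 h2 h3, A (x1, h1) (x2, h2) (x3, h3) = 1 → ∀ h, A (x1, h1) (x2, h) (x3, h3) = 1) ∨
    (∀ h1 h2 h3, A (x1, h1) (x2, h2) (x3, h3) = 1 → ∀ h, A (x1, h1) (x2, h2) (x3, h) = 1)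
  dIJ : ∀ y1 y2 y3, ¬ ((∀ h, A (y1.1, h) y2 y3 = 1) ∧ (∀ h, A y1 (y2.1, h) y3 = 1))
  dIK : ∀ y1 y2 y3, ¬ ((∀ h, A (y1.1, h) y2 y3 = 1) ∧ (∀ h, A y1 y2 (y3.1, h) = 1))
  dJK : ∀ y1 y2 y3, ¬ ((∀ h, A y1 (y2.1, h) y3 = 1) ∧ (∀ h, A y1 y2 (y3.1, h) = 1))
  nI : ∃ x1 y2 y3, ∀ h, A (x1, h) y2 y3 = 1
  nJ : ∃ y1 x2 y3, ∀ h, A y1 (x2, h) y3 = 1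
  nK : ∃ y1 y2 x3, ∀ h, A y1 y2 (x3, h) = 1

variable {A B : P × P → Q × Q → R × R → ℤ}

theorem Cfg.swap12 (c : Cfg A B) :
    Cfg (fun y2 y1 y3 => A y1 y2 y3) (fun y2 y1 y3 => B y1 y2 y3) where
  A01 := fun _ _ _ => c.A01 _ _ _
  B01 := fun _ _ _ => c.B01 _ _ _
  cA := by rw [Finset.sum_comm, c.cA]; ring
  cB := by rw [Finset.sum_comm, c.cB]; ring
  pP := c.pQ
  pQ := c.pP
  pR := c.pR
  p3 := c.q3
  q3 := c.p3
  r3 := c.r3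
  pq := c.pq.symm
  pr := c.qr
  qr := c.pr
  dv := by
    intro y1 y2 y3 y1' y2' y3' z1 z2 z3 z1' z2' z3' h1 h2 h3 h4 h5 h6 h7
    have := c.dv _ _ _ _ _ _ _ _ _ _ _ _ h1 h2 h3 h4 h6 h5 h7
    tauto
  zr := by
    intro s1 s2 s3 h1 h2 h3 h
    rcases c.zr s2 s1 s3 h2 h1 h3 (by tauto) with h | h
    · exact Or.inl h.swap12
    · exact Or.inr h.swap12
  gt := by
    intro x1 x2 x3
    rcases c.gt x2 x1 x3 with h | h | h
    · exact Or.inr (Or.inl fun a b d => h b a d)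
    · exact Or.inl fun a b d => h b a d
    · exact Or.inr (Or.inr fun a b d => h b a d)
  dIJ := fun y1 y2 y3 h => c.dIJ y2 y1 y3 ⟨h.2, h.1⟩
  dIK := fun y1 y2 y3 h => c.dJK y2 y1 y3 ⟨h.1, h.2⟩
  dJK := fun y1 y2 y3 h => c.dIK y2 y1 y3 ⟨h.1, h.2⟩
  nI := by obtain ⟨a, b, d, h⟩ := c.nJ; exact ⟨b, a, d, h⟩
  nJ := by obtain ⟨a, b, d, h⟩ := c.nI; exact ⟨b, a, d, h⟩
  nK := by obtain ⟨a, b, d, h⟩ := c.nK; exact ⟨b, a, d, h⟩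

theorem Cfg.swap23 (c : Cfg A B) :
    Cfg (fun y1 y3 y2 => A y1 y2 y3) (fun y1 y3 y2 => B y1 y2 y3) where
  A01 := fun _ _ _ => c.A01 _ _ _
  B01 := fun _ _ _ => c.B01 _ _ _
  cA := by
    rw [mul_right_comm, ← c.cA]
    exact Finset.sum_congr rfl fun _ _ => Finset.sum_comm
  cB := by
    rw [mul_right_comm, ← c.cB]
    exact Finset.sum_congr rfl fun _ _ => Finset.sum_comm
  pP := c.pP
  pQ := c.pR
  pR := c.pQ
  p3 := c.p3
  q3 := c.r3
  r3 := c.q3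
  pq := c.pr
  pr := c.pq
  qr := c.qr.symm
  dv := by
    intro y1 y2 y3 y1' y2' y3' z1 z2 z3 z1' z2' z3' h1 h2 h3 h4 h5 h6 h7
    have := c.dv _ _ _ _ _ _ _ _ _ _ _ _ h1 h2 h3 h4 h5 h7 h6
    tauto
  zr := by
    intro s1 s2 s3 h1 h2 h3 h
    rcases c.zr s1 s3 s2 h1 h3 h2 (by tauto) with h | h
    · exact Or.inl h.swap23
    · exact Or.inr h.swap23
  gt := by
    intro x1 x2 x3
    rcases c.gt x1 x3 x2 with h | h | h
    · exact Or.inl fun a b d => h a d b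
    · exact Or.inr (Or.inr fun a b d => h a d b)
    · exact Or.inr (Or.inl fun a b d => h a d b)
  dIJ := fun y1 y2 y3 h => c.dIK y1 y3 y2 ⟨h.1, h.2⟩
  dIK := fun y1 y2 y3 h => c.dIJ y1 y3 y2 ⟨h.1, h.2⟩
  dJK := fun y1 y2 y3 h => c.dJK y1 y3 y2 ⟨h.2, h.1⟩
  nI := by obtain ⟨a, b, d, h⟩ := c.nI; exact ⟨a, d, b, h⟩
  nJ := by obtain ⟨a, b, d, h⟩ := c.nK; exact ⟨a, d, b, h⟩
  nK := by obtain ⟨a, b, d, h⟩ := c.nJ; exact ⟨a, d, b, h⟩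

/-- difference of two point masses -/
def dl {X : Type} [DecidableEq X] (a b : X) (y : X) : ℤ :=
  (if y = a then 1 else 0) - (if y = b then 1 else 0)

theorem sum_dl {X : Type} [DecidableEq X] [Fintype X] (a b : X) (g : X → ℤ) :
    ∑ y, dl a b y * g y = g a - g b := by
  simp [dl, sub_mul, Finset.sum_sub_distrib]

theorem tst_dl (x h h' : P) : Tst 2 (dl (x, h) (x, h')) := by
  intro x'
  simp only [dl, Finset.sum_sub_distrib, Prod.mk.injEq]
  by_cases hx : x' = x <;> simp [hx]

theorem tst_dl1 (x x' : P) : Tst 1 (fun y : P × P => dl x x' y.1) := by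
  refine ⟨fun _ _ _ => rfl, ?_⟩
  rw [Fintype.sum_prod_type]
  have := sum_dl x x' (fun _ => (Fintype.card P : ℤ))
  simp only [Finset.sum_const, Finset.card_univ, nsmul_eq_mul]
  rw [sub_self] at this
  rw [← this]
  exact Finset.sum_congr rfl fun _ _ => mul_comm _ _

theorem sum_dl1 (x x' : P) (g : P × P → ℤ) :
    ∑ y, dl x x' y.1 * g y = ∑ h, g (x, h) - ∑ h, g (x', h) := by
  rw [Fintype.sum_prod_type]
  simp only [← Finset.mul_sum]
  rw [sum_dl x x' (fun x => ∑ h, g (x, h))]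

theorem Zr.z022 {F : P × P → Q × Q → R × R → ℤ} (h : Zr 0 2 2 F) (x2 : Q) (x3 : R) :
    Alt (fun h2 h3 => ∑ y1, F y1 (x2, h2) (x3, h3)) := by
  intro a a' b b'
  have := h (fun _ => 1) _ _ (fun _ _ => rfl) (tst_dl x2 a a') (tst_dl x3 b b')
  simp only [sum_dl, one_mul, Finset.sum_sub_distrib] at this
  linarith

theorem Zr.z122 {F : P × P → Q × Q → R × R → ℤ} (h : Zr 1 2 2 F) (x1 x1' : P) (x2 : Q) (x3 : R) :
    Alt (fun h2 h3 => ∑ h1, F (x1, h1) (x2, h2) (x3, h3) -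
      ∑ h1, F (x1', h1) (x2, h2) (x3, h3)) := by
  intro a a' b b'
  have := h _ _ _ (tst_dl1 x1 x1') (tst_dl x2 a a') (tst_dl x3 b b')
  simp only [sum_dl, sum_dl1, Finset.sum_sub_distrib] at this
  simp only
  linarith

end TC

set_option linter.unusedSectionVars false
set_option linter.unusedDecidableInType false
set_option linter.unusedFintypeInType false

namespace TC

theorem Alt.add {X Y : Type*} {f g : X → Y → ℤ} (hf : Alt f) (hg : Alt g) :
    Alt (fun a b => f a b + g a b) := by
  intro a a' b b'
  have h1 := hf a a' b b'
  have h2 := hg a a' b b'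
  simp only
  linarith

theorem Alt.sum {ι X Y : Type*} [Fintype ι] {f : ι → X → Y → ℤ} (hf : ∀ i, Alt (f i)) :
    Alt (fun a b => ∑ i, f i a b) := by
  intro a a' b b'
  simp only [← Finset.sum_add_distrib]
  exact Finset.sum_congr rfl fun i _ => hf i a a' b b'

theorem Alt.smul {X Y : Type*} {f : X → Y → ℤ} {n : ℤ} (hn : n ≠ 0)
    (hf : Alt (fun a b => n * f a b)) : Alt f := by
  intro a a' b b'
  have := hf a a' b b'
  simp only [← mul_add] at this
  exact mul_left_cancel₀ hn this

theorem Alt.congr {X Y : Type*} {f g : X → Y → ℤ} (hf : Alt f) (h : ∀ a b, g a b = f a b) :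
    Alt g := by
  intro a a' b b'
  simp only [h]
  exact hf a a' b b'

theorem alt_of_diff_sum {ι X Y : Type*} [Fintype ι] [Nonempty ι] {f : ι → X → Y → ℤ}
    (hd : ∀ i j, Alt (fun a b => f i a b - f j a b)) (hs : Alt (fun a b => ∑ i, f i a b)) (i : ι) :
    Alt (f i) := by
  apply Alt.smul (n := Fintype.card ι) (by exact_mod_cast Fintype.card_ne_zero)
  apply ((Alt.sum (hd i)).add hs).congr
  intro a b
  simp

variable {P Q R : Type} [Fintype P] [Fintype Q] [Fintype R] [DecidableEq P] [DecidableEq Q]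
  [DecidableEq R]

theorem three {X : Type*} [Fintype X] (h : 3 ≤ Fintype.card X) : ∃ a b c : X, a ≠ b ∧ a ≠ c ∧ b ≠ c := by
  have := Fintype.two_lt_card_iff.1 (show 2 < Fintype.card X by omega)
  obtain ⟨a, b, c, h⟩ := this
  exact ⟨a, b, c, h.1, h.2.1, h.2.2⟩

theorem other {X : Type*} [Fintype X] (h : 3 ≤ Fintype.card X) (x : X) : ∃ a : X, a ≠ x := by
  obtain ⟨a, b, c, h1, h2, h3⟩ := three h
  by_cases ha : a = x
  · exact ⟨b, fun hb => h1 (ha.trans hb.symm)⟩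
  · exact ⟨a, ha⟩

theorem step1_abs {f : P → Q → R → ℤ} (hp : 3 ≤ Fintype.card P) (h01 : ∀ x a b, f x a b = 0 ∨ f x a b = 1)
    (hd : ∀ i j, Alt (fun a b => f i a b - f j a b)) (hs : ¬ Alt (fun a b => ∑ i, f i a b))
    (hn2 : ∀ x b, ¬ ∀ a, f x a b = 1) (hn3 : ∀ x a, ¬ ∀ b, f x a b = 1) :
    ∃ x x' a b, x ≠ x' ∧ f x a b = 1 ∧ f x' a b = 1 := by
  by_contra hc
  push Not at hc
  have hna : ∀ i, ¬ Alt (f i) := by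
    intro i hi
    apply hs
    apply Alt.sum
    intro j
    apply ((hd j i).add hi).congr
    intro a b; ring
  have hne : ∀ i, ∃ a b, f i a b = 1 := by
    intro i
    by_contra hh
    push Not at hh
    apply hna i
    intro a a' b b'
    have h0 : ∀ a b, f i a b = 0 := fun a b => (h01 i a b).resolve_right (hh a b)
    simp [h0]
  obtain ⟨x, y, z, hxy, hxz, hyz⟩ := three hp
  obtain ⟨a, -, -⟩ := hne x
  have key : ∀ i j, i ≠ j → ((∃ b, f i a b = 1) ↔ ¬ ∃ b, f j a b = 1) := by
    intro i j hij
    constructor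
    · rintro ⟨b, hb⟩ ⟨b', hb'⟩
      apply hn2 i b
      intro a'
      have h1 := hd i j a a' b b'
      simp only at h1
      have h2 := hc i j a b hij hb
      have h3 := hc j i a b' hij.symm hb'
      have h4 := h01 i a' b
      have h5 := h01 j a' b
      have h6 := h01 i a' b'
      have h7 := h01 j a' b'
      have h8 := h01 j a b
      have h9 := h01 i a b'
      omega
    · intro hj
      by_contra hi
      push Not at hi hj
      obtain ⟨a', b, hb⟩ := hne i
      apply hn3 i a'
      intro b'
      have h1 := hd i j a a' b b'
      simp only at h1
      have h2 := hc i j a' b hij hb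
      have h4 := h01 i a b
      have h5 := h01 j a b
      have h6 := h01 i a b'
      have h7 := h01 j a b'
      have h8 := h01 j a' b
      have h9 := h01 i a' b'
      have h10 := h01 j a' b'
      have := hi b
      have := hi b'
      have := hj b
      have := hj b'
      omega
  have h1 := key x y hxy
  have h2 := key x z hxz
  have h3 := key y z hyz
  tauto

variable {A B : P × P → Q × Q → R × R → ℤ}

open Classical in
/-- indicator of lines in the first direction -/
noncomputable def Sf (A : P × P → Q × Q → R × R → ℤ) (x1 : P) (y2 : Q × Q) (y3 : R × R) : ℤ :=
  if ∀ h, A (x1, h) y2 y3 = 1 then 1 else 0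

theorem Sf01 (x1 : P) (y2 : Q × Q) (y3 : R × R) : Sf A x1 y2 y3 = 0 ∨ Sf A x1 y2 y3 = 1 := by
  unfold Sf; split_ifs <;> simp

theorem Sf_iff {x1 : P} {y2 : Q × Q} {y3 : R × R} :
    Sf A x1 y2 y3 = 1 ↔ ∀ h, A (x1, h) y2 y3 = 1 := by
  unfold Sf; split_ifs with h <;> simp [h]

namespace Cfg

theorem neP (c : Cfg A B) : Nonempty P := Fintype.card_pos_iff.1 c.pP.pos
theorem neQ (c : Cfg A B) : Nonempty Q := Fintype.card_pos_iff.1 c.pQ.pos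
theorem neR (c : Cfg A B) : Nonempty R := Fintype.card_pos_iff.1 c.pR.pos

theorem gridI (c : Cfg A B) {x1 : P} {x2 : Q} {x3 : R} {h2 : Q} {h3 : R}
    (h : ∀ h1, A (x1, h1) (x2, h2) (x3, h3) = 1) {a : P} {b : Q} {d : R}
    (hp : A (x1, a) (x2, b) (x3, d) = 1) : ∀ h1, A (x1, h1) (x2, b) (x3, d) = 1 := by
  rcases c.gt x1 x2 x3 with g | g | g
  · exact g _ _ _ hp
  · exact (c.dIJ (x1, a) (x2, h2) (x3, h3) ⟨h, g _ _ _ (h a)⟩).elim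
  · exact (c.dIK (x1, a) (x2, h2) (x3, h3) ⟨h, g _ _ _ (h a)⟩).elim

theorem noline2 (c : Cfg A B) (x1 : P) (x2 : Q) (y3 : R × R) : ¬ ∀ h2, Sf A x1 (x2, h2) y3 = 1 := by
  intro h
  obtain ⟨a⟩ := c.neP
  obtain ⟨b⟩ := c.neQ
  exact c.dIJ (x1, a) (x2, b) y3 ⟨Sf_iff.1 (h b), fun h2 => Sf_iff.1 (h h2) a⟩

theorem noline3 (c : Cfg A B) (x1 : P) (y2 : Q × Q) (x3 : R) : ¬ ∀ h3, Sf A x1 y2 (x3, h3) = 1 := by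
  intro h
  obtain ⟨a⟩ := c.neP
  obtain ⟨b⟩ := c.neR
  exact c.dIK (x1, a) y2 (x3, b) ⟨Sf_iff.1 (h b), fun h2 => Sf_iff.1 (h h2) a⟩

theorem sumS (c : Cfg A B) (x1 : P) (x2 : Q) (x3 : R) :
    Alt (fun h2 h3 => ∑ h1, A (x1, h1) (x2, h2) (x3, h3) -
      (Fintype.card P : ℤ) * Sf A x1 (x2, h2) (x3, h3)) := by
  have good : (∀ h1 h2 h3, A (x1, h1) (x2, h2) (x3, h3) = 1 →
      ∀ h, A (x1, h) (x2, h2) (x3, h3) = 1) → Alt (fun h2 h3 => ∑ h1, A (x1, h1) (x2, h2) (x3, h3) -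
      (Fintype.card P : ℤ) * Sf A x1 (x2, h2) (x3, h3)) := by
    intro g
    have : ∀ h2 h3, ∑ h1, A (x1, h1) (x2, h2) (x3, h3) -
      (Fintype.card P : ℤ) * Sf A x1 (x2, h2) (x3, h3) = 0 := by
      intro h2 h3
      rcases Sf01 (A := A) x1 (x2, h2) (x3, h3) with h | h
      · have h0 : ∀ h1, A (x1, h1) (x2, h2) (x3, h3) = 0 := by
          intro h1
          refine (c.A01 _ _ _).resolve_right fun hh => ?_
          have := Sf_iff.2 (g _ _ _ hh)
          omega
        simp [h, h0]
      · simp [h, Sf_iff.1 h]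
    intro a a' b b'
    simp [this]
  by_cases hS : ∃ h2 h3, Sf A x1 (x2, h2) (x3, h3) = 1
  · obtain ⟨h2, h3, h⟩ := hS
    exact good fun _ _ _ hp => c.gridI (Sf_iff.1 h) hp
  · push Not at hS
    have hS0 : ∀ h2 h3, Sf A x1 (x2, h2) (x3, h3) = 0 := fun h2 h3 =>
      (Sf01 _ _ _).resolve_right (hS h2 h3)
    rcases c.gt x1 x2 x3 with g | g | g
    · exact good g
    · have : ∀ a a' b h1, A (x1, h1) (x2, a) (x3, b) = A (x1, h1) (x2, a') (x3, b) := by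
        intro a a' b h1
        have e1 := c.A01 (x1, h1) (x2, a) (x3, b)
        have e2 := c.A01 (x1, h1) (x2, a') (x3, b)
        have e3 := fun h => g h1 a b h a'
        have e4 := fun h => g h1 a' b h a
        omega
      intro a a' b b'
      simp only [hS0]
      simp only [this a a']
      ring
    · have : ∀ a b b' h1, A (x1, h1) (x2, a) (x3, b) = A (x1, h1) (x2, a) (x3, b') := by
        intro a b b' h1
        have e1 := c.A01 (x1, h1) (x2, a) (x3, b)
        have e2 := c.A01 (x1, h1) (x2, a) (x3, b')
        have e3 := fun h => g h1 a b h b'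
        have e4 := fun h => g h1 a b' h b
        omega
      intro a a' b b'
      simp only [hS0]
      simp only [this _ b b']

theorem S022 (c : Cfg A B) (h : Zr 0 2 2 A) (x2 : Q) (x3 : R) :
    Alt (fun h2 h3 => ∑ x1, Sf A x1 (x2, h2) (x3, h3)) := by
  apply Alt.smul (n := Fintype.card P) (by exact_mod_cast c.pP.ne_zero)
  intro a a' b b'
  have e1 := h.z022 x2 x3 a a' b b'
  have e2 := Alt.sum (fun x1 => c.sumS x1 x2 x3) a a' b b'
  simp only [Fintype.sum_prod_type, Finset.sum_sub_distrib, ← Finset.mul_sum] at e1 e2 ⊢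
  linarith

theorem S122 (c : Cfg A B) (h : Zr 1 2 2 A) (x1 x1' : P) (x2 : Q) (x3 : R) :
    Alt (fun h2 h3 => Sf A x1 (x2, h2) (x3, h3) - Sf A x1' (x2, h2) (x3, h3)) := by
  apply Alt.smul (n := Fintype.card P) (by exact_mod_cast c.pP.ne_zero)
  intro a a' b b'
  have e1 := h.z122 x1 x1' x2 x3 a a' b b'
  have e2 := c.sumS x1 x2 x3 a a' b b'
  have e3 := c.sumS x1' x2 x3 a a' b b'
  simp only [mul_sub] at e1 e2 e3 ⊢
  linarith

theorem lemN' (c : Cfg A B) (h1 : Zr 1 2 2 A)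
    (h0 : ∀ x2 x3, Alt (fun h2 h3 => ∑ x1, Sf A x1 (x2, h2) (x3, h3))) : False := by
  obtain ⟨x1, ⟨x2, h2⟩, ⟨x3, h3⟩, hh⟩ := c.nI
  have hn := c.neP
  have := alt_of_diff_sum (fun i j => c.S122 h1 i j x2 x3) (h0 x2 x3) x1
  have e := Sf_iff.2 hh
  rcases lined (fun _ _ => Sf01 _ _ _) this with h | h
  · exact c.noline2 x1 x2 (x3, h3) fun a => by rw [h a h2, e]
  · exact c.noline3 x1 (x2, h2) x3 fun a => by rw [h h2 a h3, e]

theorem lemN (c : Cfg A B) (h1 : Zr 1 2 2 A) (h0 : Zr 0 2 2 A) : False :=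
  c.lemN' h1 (fun _ _ => c.S022 h0 _ _)

theorem step1 (c : Cfg A B) (h1 : Zr 1 2 2 A) : ∃ x2 x3,
    ¬ Alt (fun h2 h3 => ∑ x1, Sf A x1 (x2, h2) (x3, h3)) ∧
    ∃ x1 x1' h2 h3, x1 ≠ x1' ∧ Sf A x1 (x2, h2) (x3, h3) = 1 ∧ Sf A x1' (x2, h2) (x3, h3) = 1 := by
  by_contra hc
  apply c.lemN' h1
  intro x2 x3
  by_contra hn
  refine hc ⟨x2, x3, hn, ?_⟩
  exact step1_abs c.p3 (fun _ _ _ => Sf01 _ _ _) (fun i j => c.S122 h1 i j x2 x3) hn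
    (fun x b => c.noline2 _ _ _) (fun x b => c.noline3 _ _ _)

theorem no122 (c : Cfg A B) {x1 h1 h1' : P} {y2 : Q × Q} {y3 : R × R}
    (e : B (x1, h1) y2 y3 = 1) (e' : B (x1, h1') y2 y3 = 1) : h1 = h1' := by
  by_contra hne
  obtain ⟨a, u, v, hA⟩ := c.nI
  have := c.dv (a, h1) u v (a, h1') u v _ _ _ _ _ _ (hA _) (hA _) e e'
    ⟨by simp, by simp [hne]⟩ ⟨by simp, by simp⟩ ⟨by simp, by simp⟩
  simp at this
  exact hne this

theorem no212 (c : Cfg A B) {x2 h2 h2' : Q} {y1 : P × P} {y3 : R × R}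
    (e : B y1 (x2, h2) y3 = 1) (e' : B y1 (x2, h2') y3 = 1) : h2 = h2' :=
  c.swap12.no122 e e'

theorem no221 (c : Cfg A B) {x3 h3 h3' : R} {y1 : P × P} {y2 : Q × Q}
    (e : B y1 y2 (x3, h3) = 1) (e' : B y1 y2 (x3, h3') = 1) : h3 = h3' :=
  c.swap23.no212 e e'

theorem injY (c : Cfg A B) (h1 : Zr 1 2 2 A) {y1 y1' : P × P} {y2 : Q × Q} {y3 : R × R}
    (e : B y1 y2 y3 = 1) (e' : B y1' y2 y3 = 1) : y1 = y1' := by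
  obtain ⟨y, h⟩ := y1
  obtain ⟨y', h'⟩ := y1'
  by_cases hy : y = y'
  · subst hy
    rw [c.no122 e e']
  · exfalso
    obtain ⟨x2, x3, -, x1, x1', h2, h3, hne, e1, e2⟩ := c.step1 h1
    have := c.dv _ _ _ _ _ _ _ _ _ _ _ _ (Sf_iff.1 e1 h) (Sf_iff.1 e2 h) e e'
      ⟨by simp [hne, hy], by simp [hne, hy]⟩ ⟨by simp, by simp⟩ ⟨by simp, by simp⟩
    simp at this
    exact hne this

/-- fibre sums of `B` -/
def _root_.TC.Bp (B : P × P → Q × Q → R × R → ℤ) (x1 : P) (y2 : Q × Q) (y3 : R × R) : ℤ :=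
  ∑ h, B (x1, h) y2 y3

theorem sum01 {X : Type*} [Fintype X] {f : X → ℤ} (h01 : ∀ x, f x = 0 ∨ f x = 1)
    (hi : ∀ x y, f x = 1 → f y = 1 → x = y) : (∑ x, f x = 0 ∧ ∀ x, f x = 0) ∨
      (∑ x, f x = 1 ∧ ∃ x, f x = 1) := by
  by_cases h : ∃ x, f x = 1
  · obtain ⟨x, hx⟩ := h
    refine Or.inr ⟨?_, x, hx⟩
    rw [Finset.sum_eq_single x, hx]
    · intro y _ hy
      exact (h01 y).resolve_right fun e => hy (hi _ _ e hx)
    · simp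
  · push Not at h
    have : ∀ x, f x = 0 := fun x => (h01 x).resolve_right (h x)
    exact Or.inl ⟨by simp [this], this⟩

theorem Bp_cases (c : Cfg A B) (x1 : P) (y2 : Q × Q) (y3 : R × R) :
    (Bp B x1 y2 y3 = 0 ∧ ∀ h, B (x1, h) y2 y3 = 0) ∨ (Bp B x1 y2 y3 = 1 ∧ ∃ h, B (x1, h) y2 y3 = 1) :=
  sum01 (fun _ => c.B01 _ _ _) (fun _ _ e e' => c.no122 e e')

theorem Bp01 (c : Cfg A B) (x1 : P) (y2 : Q × Q) (y3 : R × R) :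
    Bp B x1 y2 y3 = 0 ∨ Bp B x1 y2 y3 = 1 := by
  rcases c.Bp_cases x1 y2 y3 with h | h
  · exact Or.inl h.1
  · exact Or.inr h.1

theorem Bp_iff (c : Cfg A B) {x1 : P} {y2 : Q × Q} {y3 : R × R} :
    Bp B x1 y2 y3 = 1 ↔ ∃ h, B (x1, h) y2 y3 = 1 := by
  rcases c.Bp_cases x1 y2 y3 with h | h
  · simp [h.1, h.2]
  · simp [h.1, h.2]

theorem Bp022 (h : Zr 0 2 2 B) (x2 : Q) (x3 : R) :
    Alt (fun h2 h3 => ∑ x1, Bp B x1 (x2, h2) (x3, h3)) := by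
  have := h.z022 x2 x3
  simp only [Fintype.sum_prod_type] at this
  exact this

theorem Bp122 (h : Zr 1 2 2 B) (x1 x1' : P) (x2 : Q) (x3 : R) :
    Alt (fun h2 h3 => Bp B x1 (x2, h2) (x3, h3) - Bp B x1' (x2, h2) (x3, h3)) :=
  h.z122 x1 x1' x2 x3

theorem full2 (c : Cfg A B) (hpq : Fintype.card P < Fintype.card Q) (x1 : P) (x2 : Q) (y3 : R × R)
    (h : ∀ h2, Bp B x1 (x2, h2) y3 = 1) : False := by
  have h' := fun h2 => c.Bp_iff.1 (h h2)
  choose g hg using h'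
  have : Function.Injective g := by
    intro a b hab
    have e := hg a
    rw [hab] at e
    exact c.no212 e (hg b)
  have := Fintype.card_le_of_injective g this
  omega

theorem full3 (c : Cfg A B) (hpr : Fintype.card P < Fintype.card R) (x1 : P) (y2 : Q × Q) (x3 : R)
    (h : ∀ h3, Bp B x1 y2 (x3, h3) = 1) : False :=
  c.swap23.full2 hpr x1 x3 y2 h

theorem exB (c : Cfg A B) : ∃ y1 y2 y3, B y1 y2 y3 = 1 := by
  by_contra h
  push Not at h
  have h0 : ∀ y1 y2 y3, B y1 y2 y3 = 0 := fun _ _ _ => (c.B01 _ _ _).resolve_right (h _ _ _)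
  have := c.cB
  simp [h0] at this
  have a := c.p3
  have b := c.q3
  have d := c.r3
  omega

theorem case1 (c : Cfg A B) (hpq : Fintype.card P < Fintype.card Q)
    (hpr : Fintype.card P < Fintype.card R) (h0 : Zr 0 2 2 B) (h1 : Zr 1 2 2 B) : False := by
  obtain ⟨⟨x1, a1⟩, ⟨x2, h2⟩, ⟨x3, h3⟩, hh⟩ := c.exB
  have hn := c.neP
  have := alt_of_diff_sum (fun i j => Bp122 h1 i j x2 x3) (Bp022 h0 x2 x3) x1
  have e : Bp B x1 (x2, h2) (x3, h3) = 1 := c.Bp_iff.2 ⟨_, hh⟩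
  rcases lined (fun _ _ => c.Bp01 _ _ _) this with h | h
  · exact c.full2 hpq x1 x2 (x3, h3) fun a => by rw [h a h2, e]
  · exact c.full3 hpr x1 (x2, h2) x3 fun a => by rw [h h2 a h3, e]

end Cfg
end TC

set_option linter.unusedSectionVars false
set_option linter.unusedDecidableInType false
set_option linter.unusedFintypeInType false

namespace TC

variable {P Q R : Type} [Fintype P] [Fintype Q] [Fintype R] [DecidableEq P] [DecidableEq Q]
  [DecidableEq R] {A B : P × P → Q × Q → R × R → ℤ}

theorem cnt_le {X Y : Type*} [Fintype X] [Fintype Y] {f : X → ℤ} (h01 : ∀ x, f x = 0 ∨ f x = 1)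
    (g : X → Y) (hg : ∀ x x', f x = 1 → f x' = 1 → g x = g x' → x = x') :
    ∑ x, f x ≤ Fintype.card Y := by
  classical
  have : ∀ x ∈ Finset.univ, f x = if f x = 1 then 1 else 0 := by
    intro x _
    rcases h01 x with h | h <;> simp [h]
  rw [Finset.sum_congr rfl this, Finset.sum_boole]
  norm_cast
  apply Finset.card_le_card_of_injOn g (by simp)
  intro x hx x' hx' h
  simp at hx hx'
  exact hg x x' hx hx' h

namespace Cfg

theorem rot3 (c : Cfg A B) :
    Cfg (fun y3 y1 y2 => A y1 y2 y3) (fun y3 y1 y2 => B y1 y2 y3) := c.swap23.swap12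

theorem pair112 (c : Cfg A B) (hpq : Fintype.card P < Fintype.card Q)
    (hpr : Fintype.card P < Fintype.card R) (hB : Zr 1 2 2 B) {x1 x1' : P} {y2 : Q × Q}
    {y3 : R × R} (hne : Bp B x1 y2 y3 ≠ Bp B x1' y2 y3) :
    ∃ x h h' x2 a a' y3, a ≠ a' ∧ B (x, h) (x2, a) y3 = 1 ∧ B (x, h') (x2, a') y3 = 1 := by
  obtain ⟨x1, x1', h1, h0⟩ : ∃ x1 x1', Bp B x1 y2 y3 = 1 ∧ Bp B x1' y2 y3 = 0 := by
    rcases c.Bp01 x1 y2 y3 with h | h <;> rcases c.Bp01 x1' y2 y3 with h' | h'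
    · omega
    · exact ⟨_, _, h', h⟩
    · exact ⟨_, _, h, h'⟩
    · omega
  obtain ⟨x2, a⟩ := y2
  obtain ⟨x3, b⟩ := y3
  have hF := Bp122 hB x1 x1' x2 x3
  obtain ⟨a', ha'⟩ := not_forall.1 fun h => c.full2 hpq x1 x2 (x3, b) h
  obtain ⟨b', hb'⟩ := not_forall.1 fun h => c.full3 hpr x1 (x2, a) x3 h
  have key : ∀ d, Bp B x1 (x2, d) (x3, b) = 1 ∨ Bp B x1' (x2, d) (x3, b') = 1 := by
    intro d
    have e1 := hF a d b b'
    have e2 := hF a a' b b'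
    simp only at e1 e2
    have := c.Bp01 x1 (x2, d) (x3, b)
    have := c.Bp01 x1 (x2, d) (x3, b')
    have := c.Bp01 x1' (x2, d) (x3, b)
    have := c.Bp01 x1' (x2, d) (x3, b')
    have := c.Bp01 x1 (x2, a) (x3, b')
    have := c.Bp01 x1' (x2, a) (x3, b')
    have := c.Bp01 x1 (x2, a') (x3, b')
    have := c.Bp01 x1' (x2, a') (x3, b')
    have := c.Bp01 x1 (x2, a') (x3, b)
    have := c.Bp01 x1' (x2, a') (x3, b)
    omega
  have fin1 : ∀ d d' x y3, d ≠ d' → Bp B x (x2, d) y3 = 1 → Bp B x (x2, d') y3 = 1 →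
    ∃ x h h' x2 a a' y3, a ≠ a' ∧ B (x, h) (x2, a) y3 = 1 ∧ B (x, h') (x2, a') y3 = 1 := by
    intro d d' x y3 hdd e e'
    obtain ⟨h, e⟩ := c.Bp_iff.1 e
    obtain ⟨h', e'⟩ := c.Bp_iff.1 e'
    exact ⟨x, h, h', x2, d, d', y3, hdd, e, e'⟩
  obtain ⟨u, v, w, huv, huw, hvw⟩ := three c.q3
  rcases key u with hu | hu <;> rcases key v with hv | hv <;> rcases key w with hw | hw
  · exact fin1 u v _ _ huv hu hv
  · exact fin1 u v _ _ huv hu hv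
  · exact fin1 u w _ _ huw hu hw
  · exact fin1 v w _ _ hvw hv hw
  · exact fin1 v w _ _ hvw hv hw
  · exact fin1 u w _ _ huw hu hw
  · exact fin1 u v _ _ huv hu hv
  · exact fin1 u v _ _ huv hu hv

theorem nodiff2 (c : Cfg A B) {x h h' : P} {x2 a a' : Q} {y3 : R × R} (haa : a ≠ a')
    (e : B (x, h) (x2, a) y3 = 1) (e' : B (x, h') (x2, a') y3 = 1) {x1 : P} {z2 b b' : Q}
    {z3 : R × R} (f : Sf A x1 (z2, b) z3 = 1) (f' : Sf A x1 (z2, b') z3 = 1) : b = b' := by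
  by_contra hb
  have hh : h ≠ h' := by
    rintro rfl
    exact haa (c.no212 e e')
  have := c.dv _ _ _ _ _ _ _ _ _ _ _ _ (Sf_iff.1 f h) (Sf_iff.1 f' h') e e'
    ⟨by simp, by simp⟩ ⟨by simp, by simp [haa, hb]⟩ ⟨by simp, by simp⟩
  simp at this
  exact hb this.2

theorem Sf_swap23 {x : P} {y2 : Q × Q} {y3 : R × R} :
    Sf (fun y1 y3 y2 => A y1 y2 y3) x y3 y2 = Sf A x y2 y3 := rfl

theorem case3 (c : Cfg A B) (hpq : Fintype.card P < Fintype.card Q)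
    (hpr : Fintype.card P < Fintype.card R) (hA : Zr 0 2 2 A) (hB : Zr 1 2 2 B) :
    ∀ x1 x1' y2 y3, Bp B x1 y2 y3 = Bp B x1' y2 y3 := by
  intro x1 x1' y2 y3
  by_contra hne
  obtain ⟨x, h, h', x2, a, a', z3, haa, e, e'⟩ := c.pair112 hpq hpr hB hne
  obtain ⟨w, k, k', w3, d, d', z2, hdd, f, f'⟩ := c.swap23.pair112 hpr hpq hB.swap23
    (x1 := x1) (x1' := x1') (y2 := y3) (y3 := y2) hne
  obtain ⟨s1, ⟨s2, t2⟩, ⟨s3, t3⟩, hs⟩ := c.nI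
  have e1 := Sf_iff.2 hs
  have hnn : ∀ x y2 y3, 0 ≤ Sf A x y2 y3 := fun x y2 y3 => by
    rcases Sf01 (A := A) x y2 y3 with h | h <;> omega
  have ex : ∀ y2 y3, 0 < ∑ x, Sf A x y2 y3 → ∃ x, Sf A x y2 y3 = 1 := by
    intro y2 y3 hpos
    by_contra hcon
    push Not at hcon
    have : ∀ x, Sf A x y2 y3 = 0 := fun x => (Sf01 _ _ _).resolve_right (hcon x)
    simp [this] at hpos
  have hpos : ∑ x, Sf A x (s2, t2) (s3, t3) ≠ 0 := by
    have := Finset.single_le_sum (f := fun x => Sf A x (s2, t2) (s3, t3)) (fun x _ => hnn x _ _)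
      (Finset.mem_univ s1)
    omega
  rcases posline (fun a b => Finset.sum_nonneg fun x _ => hnn x _ _) (c.S022 hA s2 s3) t2 t3 hpos
    with ⟨t, ht⟩ | ⟨t, ht⟩
  · have h' := fun b => ex _ _ (ht b)
    choose g hg using h'
    have : Function.Injective g := by
      intro b b' hbb
      have e1 := hg b
      rw [hbb] at e1
      exact c.swap23.nodiff2 hdd f f' e1 (hg b')
    have := Fintype.card_le_of_injective g this
    omega
  · have h' := fun b => ex _ _ (ht b)
    choose g hg using h'
    have : Function.Injective g := by
      intro b b' hbb
      have e1 := hg b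
      rw [hbb] at e1
      exact c.nodiff2 haa e e' e1 (hg b')
    have := Fintype.card_le_of_injective g this
    omega

theorem lemB1 (c : Cfg A B) : Zr 0 2 2 B ∨ Zr 1 2 2 B := by
  rcases c.zr 0 2 2 (by omega) (by omega) (by omega) (by omega) with h | h
  · rcases c.zr 1 2 2 (by omega) (by omega) (by omega) (by omega) with h' | h'
    · exact (c.lemN h' h).elim
    · exact Or.inr h'
  · exact Or.inl h

/-- if over a column everything sits in one low digit then the fibre sums are alternating -/
theorem conc (c : Cfg A B) (u : P) (x2 : Q) (x3 : R)
    (hu : ∀ u' h2 h3, Bp B u' (x2, h2) (x3, h3) = 1 → u' = u) :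
    Alt (fun h2 h3 => Bp B u (x2, h2) (x3, h3)) := by
  have h0 : ∀ u', u' ≠ u → ∀ h2 h3, Bp B u' (x2, h2) (x3, h3) = 0 := fun u' hne h2 h3 =>
    (c.Bp01 _ _ _).resolve_right fun e => hne (hu _ _ _ e)
  rcases c.lemB1 with h | h
  · apply (Bp022 h x2 x3).congr
    intro a b
    symm
    apply Finset.sum_eq_single u
    · intro u' _ hne
      exact h0 u' hne a b
    · simp
  · obtain ⟨u', hu'⟩ := other c.p3 u
    apply (Bp122 h u u' x2 x3).congr
    intro a b
    simp [h0 u' hu']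

theorem conc_lined (c : Cfg A B) (u : P) (x2 : Q) (x3 : R)
    (hu : ∀ u' h2 h3, Bp B u' (x2, h2) (x3, h3) = 1 → u' = u) :
    (∀ a a' b, Bp B u (x2, a) (x3, b) = Bp B u (x2, a') (x3, b)) ∨
    (∀ a b b', Bp B u (x2, a) (x3, b) = Bp B u (x2, a) (x3, b')) :=
  lined (fun _ _ => c.Bp01 _ _ _) (c.conc u x2 x3 hu)

/-- the shadow of `B` in the last two coordinates -/
def _root_.TC.InB (B : P × P → Q × Q → R × R → ℤ) (y2 : Q × Q) (y3 : R × R) : Prop :=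
  ∃ y1, B y1 y2 y3 = 1

theorem good_count (c : Cfg A B) (good : ∀ x1 x1' y2 y3, Bp B x1 y2 y3 = Bp B x1' y2 y3) (x1 : P) :
    ∑ y2, ∑ y3, Bp B x1 y2 y3 = (Fintype.card Q : ℤ) * Fintype.card R := by
  have h := c.cB
  have h2 : ∑ y1, ∑ y2, ∑ y3, B y1 y2 y3 = ∑ x, ∑ y2, ∑ y3, Bp B x y2 y3 := by
    rw [Fintype.sum_prod_type]
    refine Finset.sum_congr rfl fun x _ => ?_
    rw [Finset.sum_comm]
    refine Finset.sum_congr rfl fun y2 _ => ?_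
    rw [Finset.sum_comm]
    rfl
  rw [h2] at h
  simp only [good _ x1] at h
  simp only [Finset.sum_const, Finset.card_univ, nsmul_eq_mul, mul_assoc] at h
  exact mul_left_cancel₀ (by exact_mod_cast c.pP.ne_zero) h

theorem good_in (c : Cfg A B) (good : ∀ x1 x1' y2 y3, Bp B x1 y2 y3 = Bp B x1' y2 y3)
    {y2 : Q × Q} {y3 : R × R} (h : InB B y2 y3) (x1 : P) : ∃ h1, B (x1, h1) y2 y3 = 1 := by
  obtain ⟨⟨x, h⟩, e⟩ := h
  rw [← c.Bp_iff, good x1 x, c.Bp_iff]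
  exact ⟨_, e⟩

theorem lemP (c : Cfg A B) (good : ∀ x1 x1' y2 y3, Bp B x1 y2 y3 = Bp B x1' y2 y3)
    (h12 : ∀ z2 h h' z3, InB B (z2, h) z3 → InB B (z2, h') z3 → h = h')
    (hP : ∀ z2 a a' u k u' k', InB B (z2, a) (u, k) → InB B (z2, a') (u', k') → u = u') : False := by
  obtain ⟨x1⟩ := c.neP
  obtain ⟨z2⟩ := c.neQ
  have hcnt := c.good_count good x1
  have inB : ∀ {y2 y3}, Bp B x1 y2 y3 = 1 → InB B y2 y3 := fun h => by
    obtain ⟨h, e⟩ := c.Bp_iff.1 h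
    exact ⟨_, e⟩
  have hle : ∀ z2, ∑ p : Q × (R × R), Bp B x1 (z2, p.1) p.2 ≤ Fintype.card R := by
    intro z2
    apply cnt_le (fun _ => c.Bp01 _ _ _) (fun p => p.2.2)
    rintro ⟨a, u, k⟩ ⟨a', u', k'⟩ e e' hk
    simp only at e e' hk
    subst hk
    have := hP _ _ _ _ _ _ _ (inB e) (inB e')
    subst this
    rw [h12 _ _ _ _ (inB e) (inB e')]
  rw [Fintype.sum_prod_type] at hcnt
  have hcnt2 : ∑ z2, ∑ p : Q × (R × R), Bp B x1 (z2, p.1) p.2 = ∑ z2 : Q, (Fintype.card R : ℤ) := by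
    simp only [Fintype.sum_prod_type (f := fun p : Q × (R × R) => _)]
    simp only [Finset.sum_const, Finset.card_univ, nsmul_eq_mul]
    exact hcnt
  have heq := (Finset.sum_eq_sum_iff_of_le (fun z2 _ => hle z2)).1 hcnt2 z2 (Finset.mem_univ _)
  have : ∃ a y3, Bp B x1 (z2, a) y3 = 1 := by
    by_contra hcon
    push Not at hcon
    have : ∀ a y3, Bp B x1 (z2, a) y3 = 0 := fun a y3 => (c.Bp01 _ _ _).resolve_right (hcon a y3)
    simp [this] at heq
    have := c.r3
    omega
  obtain ⟨a, ⟨u, k⟩, hau⟩ := this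
  have hu : ∀ u' h1 h2, Bp (fun y3 y1 y2 => B y1 y2 y3) u' (x1, h1) (z2, h2) = 1 → u' = u := by
    intro u' h1 h2 e
    obtain ⟨h3, e⟩ := c.rot3.Bp_iff.1 e
    exact hP z2 _ _ _ _ _ _ ⟨_, e⟩ (inB hau)
  have hsum : ∑ h1, ∑ h2, Bp (fun y3 y1 y2 => B y1 y2 y3) u (x1, h1) (z2, h2) = Fintype.card R := by
    rw [← heq, Fintype.sum_prod_type, Finset.sum_comm]
    refine Finset.sum_congr rfl fun h2 _ => ?_
    rw [Fintype.sum_prod_type, Finset.sum_eq_single u]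
    · unfold Bp
      rw [Finset.sum_comm]
    · intro u' _ hne
      apply Finset.sum_eq_zero
      intro h3 _
      exact (c.Bp01 _ _ _).resolve_right fun e => hne (hP _ _ _ _ _ _ _ (inB e) (inB hau))
    · simp
  obtain ⟨p0⟩ := c.neP
  obtain ⟨q0⟩ := c.neQ
  rcases c.rot3.conc_lined u x1 z2 hu with h | h
  · have h' : ∀ h1 h2, Bp (fun y3 y1 y2 => B y1 y2 y3) u (x1, h1) (z2, h2) =
      Bp (fun y3 y1 y2 => B y1 y2 y3) u (x1, p0) (z2, h2) := fun h1 h2 => h _ _ _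
    simp only [h'] at hsum
    simp only [Finset.sum_const, Finset.card_univ, nsmul_eq_mul] at hsum
    have hd : (Fintype.card P : ℤ) ∣ Fintype.card R := ⟨_, hsum.symm⟩
    exact c.pr ((Nat.prime_dvd_prime_iff_eq c.pP c.pR).1 (by exact_mod_cast hd))
  · have h' : ∀ h1 h2, Bp (fun y3 y1 y2 => B y1 y2 y3) u (x1, h1) (z2, h2) =
      Bp (fun y3 y1 y2 => B y1 y2 y3) u (x1, h1) (z2, q0) := fun h1 h2 => h _ _ _
    simp only [h'] at hsum
    simp only [Finset.sum_const, Finset.card_univ, nsmul_eq_mul, ← Finset.mul_sum] at hsum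
    have hd : (Fintype.card Q : ℤ) ∣ Fintype.card R := ⟨_, hsum.symm⟩
    exact c.qr ((Nat.prime_dvd_prime_iff_eq c.pQ c.pR).1 (by exact_mod_cast hd))

theorem lemQ (c : Cfg A B) (good : ∀ x1 x1' y2 y3, Bp B x1 y2 y3 = Bp B x1' y2 y3)
    (h12 : ∀ z2 h h' z3, InB B (z2, h) z3 → InB B (z2, h') z3 → h = h')
    (hQ : ∀ z2 a z2' a' u k k', InB B (z2, a) (u, k) → InB B (z2', a') (u, k') → z2 = z2') :
    False := by
  obtain ⟨x1⟩ := c.neP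
  have hcnt := c.good_count good x1
  have inB : ∀ {y2 y3}, Bp B x1 y2 y3 = 1 → InB B y2 y3 := fun h => by
    obtain ⟨h, e⟩ := c.Bp_iff.1 h
    exact ⟨_, e⟩
  have hle : ∑ p : (Q × Q) × (R × R), Bp B x1 p.1 p.2 ≤ Fintype.card (R × R) := by
    apply cnt_le (fun _ => c.Bp01 _ _ _) (fun p => p.2)
    rintro ⟨⟨z2, a⟩, u, k⟩ ⟨⟨z2', a'⟩, u', k'⟩ e e' hk
    simp only [Prod.mk.injEq] at e e' hk
    obtain ⟨rfl, rfl⟩ := hk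
    have := hQ _ _ _ _ _ _ _ (inB e) (inB e')
    subst this
    rw [h12 _ _ _ _ (inB e) (inB e')]
  rw [Fintype.sum_prod_type, hcnt, Fintype.card_prod] at hle
  have hqr : Fintype.card Q ≤ Fintype.card R := by
    have h1 : Fintype.card Q * Fintype.card R ≤ Fintype.card R * Fintype.card R := by
      exact_mod_cast hle
    exact Nat.le_of_mul_le_mul_right h1 c.pR.pos
  obtain ⟨y1, ⟨z2, a⟩, ⟨u, k⟩, hb⟩ := c.exB
  obtain ⟨h1, hb⟩ := c.good_in good ⟨y1, hb⟩ x1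
  have hu : ∀ z h1 h3, Bp (fun y2 y1 y3 => B y1 y2 y3) z (x1, h1) (u, h3) = 1 → z = z2 := by
    intro z h1 h2 e
    obtain ⟨h3, e⟩ := c.swap12.Bp_iff.1 e
    exact hQ _ _ _ _ _ _ _ ⟨_, e⟩ ⟨_, hb⟩
  rcases c.swap12.conc_lined z2 x1 u hu with h | h
  · obtain ⟨h1', hne⟩ := other c.p3 h1
    have e := h h1' h1 k
    rw [c.swap12.Bp_iff.2 ⟨_, hb⟩] at e
    obtain ⟨a', e⟩ := c.swap12.Bp_iff.1 e
    have := h12 _ _ _ _ ⟨_, e⟩ ⟨_, hb⟩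
    subst this
    exact hne (c.no122 e hb)
  · have e : ∀ k', ∃ a, B (x1, h1) (z2, a) (u, k') = 1 := by
      intro k'
      have e := h h1 k' k
      rw [c.swap12.Bp_iff.2 ⟨_, hb⟩] at e
      exact c.swap12.Bp_iff.1 e
    choose g hg using e
    have : Function.Injective g := by
      intro b b' hbb
      have e1 := hg b
      rw [hbb] at e1
      exact c.no221 e1 (hg b')
    have := Fintype.card_le_of_injective g this
    exact c.qr (le_antisymm hqr this)

/-- a set in a product with any two points sharing a coordinate -/
theorem _root_.TC.cross {X Y : Type*} (E : X → Y → Prop)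
    (h : ∀ a b a' b', E a b → E a' b' → a = a' ∨ b = b') :
    (∀ a b a' b', E a b → E a' b' → a = a') ∨ (∀ a b a' b', E a b → E a' b' → b = b') := by
  by_contra hc
  push Not at hc
  obtain ⟨⟨a, b, a', b', h1, h2, h3⟩, ⟨d, e, d', e', h4, h5, h6⟩⟩ := hc
  have := h _ _ _ _ h1 h2
  have := h _ _ _ _ h1 h4
  have := h _ _ _ _ h1 h5
  have := h _ _ _ _ h2 h4
  have := h _ _ _ _ h2 h5
  have := h _ _ _ _ h4 h5
  grind

theorem good2 (c : Cfg A B) (good : ∀ x1 x1' y2 y3, Bp B x1 y2 y3 = Bp B x1' y2 y3)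
    (x2 : Q) (x3 h3 : R) (heavy : ∀ h2, ∃ x1, Sf A x1 (x2, h2) (x3, h3) = 1) : False := by
  have V : ∀ y1 y2 y3 h2 z2 z3 z2' z3', A y1 y2 y3 = 1 → (y2 = (x2, h2) → y3 ≠ (x3, h3)) →
      InB B z2 z3 → InB B z2' z3' → Rel (x2, h2) y2 z2 z2' → Rel (x3, h3) y3 z3 z3' → False := by
    rintro ⟨w, b⟩ y2 y3 h2 z2 z3 z2' z3' hA hne i1 i2 r2 r3
    obtain ⟨s, hs⟩ := heavy h2
    rw [Sf_iff] at hs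
    by_cases hw : w = s
    · subst hw
      obtain ⟨k, e⟩ := c.good_in good i1 w
      obtain ⟨k', e'⟩ := c.good_in good i2 w
      by_cases hk : k = k'
      · have := c.dv _ _ _ _ _ _ _ _ _ _ _ _ (hs b) hA e e' ⟨by simp, by simp [hk]⟩ r2 r3
        exact hne this.2.1.symm this.2.2.symm
      · obtain ⟨b', hb'⟩ := other c.p3 b
        have := c.dv _ _ _ _ _ _ _ _ _ _ _ _ (hs b') hA e e' ⟨by simp, by simp [hk, hb']⟩ r2 r3
        exact hne this.2.1.symm this.2.2.symm
    · obtain ⟨k, e⟩ := c.good_in good i1 s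
      obtain ⟨k', e'⟩ := c.good_in good i2 w
      have hw' : s ≠ w := fun h => hw h.symm
      have := c.dv _ _ _ _ _ _ _ _ _ _ _ _ (hs b) hA e e' ⟨by simp, by simp [hw']⟩ r2 r3
      exact hne this.2.1.symm this.2.2.symm
  have h12 : ∀ z2 h h' z3, InB B (z2, h) z3 → InB B (z2, h') z3 → h = h' := by
    intro z2 h h' z3 i1 i2
    by_contra hne
    obtain ⟨a, b, -, hab, -⟩ := three c.q3
    obtain ⟨s, hs⟩ := heavy b
    obtain ⟨p0⟩ := c.neP
    exact V _ _ _ a _ _ _ _ (Sf_iff.1 hs p0) (by simp [hab.symm]) i1 i2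
      ⟨by simp, by simp [hne, hab]⟩ ⟨by simp, by simp⟩
  obtain ⟨⟨w1, b1⟩, ⟨w2, h⟩, w3, hK⟩ := c.nK
  by_cases e2 : w2 = x2 <;> by_cases e3 : w3 = x3
  · subst e2 e3
    obtain ⟨s, hs⟩ := heavy h
    rw [Sf_iff] at hs
    by_cases hw : w1 = s
    · subst hw
      exact c.dIK (w1, b1) (w2, h) (w3, h3) ⟨hs, hK⟩
    · obtain ⟨y1, z2, z3, hb⟩ := c.exB
      obtain ⟨k, e⟩ := c.good_in good ⟨y1, hb⟩ s
      obtain ⟨k', e'⟩ := c.good_in good ⟨y1, hb⟩ w1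
      have hw' : s ≠ w1 := fun h => hw h.symm
      have := c.dv _ _ _ _ _ _ _ _ _ _ _ _ (hs b1) (hK h3) e e' ⟨by simp, by simp [hw']⟩
        ⟨by simp, by simp⟩ ⟨by simp, by simp⟩
      simp [hw'] at this
  · subst e2
    have e3' : x3 ≠ w3 := fun h => e3 h.symm
    apply c.lemP good h12
    intro z2 a a' u k u' k' i1 i2
    by_contra hu
    by_cases ha : a = a'
    · exact V _ _ _ h _ _ _ _ (hK h3) (by simp [e3]) i1 i2 ⟨by simp, by simp [ha]⟩
        ⟨by simp [e3', hu], by simp [e3', hu]⟩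
    · obtain ⟨t, ht⟩ := other c.q3 h
      exact V _ _ _ t _ _ _ _ (hK h3) (by simp [e3]) i1 i2 ⟨by simp, by simp [ha, ht]⟩
        ⟨by simp [e3', hu], by simp [e3', hu]⟩
  · subst e3
    have e2' : x2 ≠ w2 := fun h => e2 h.symm
    apply c.lemQ good h12
    intro z2 a z2' a' u k k' i1 i2
    by_contra hu
    obtain ⟨q0⟩ := c.neQ
    by_cases hk : k = k'
    · exact V _ _ _ q0 _ _ _ _ (hK h3) (by simp [e2]) i1 i2 ⟨by simp [e2', hu], by simp [e2', hu]⟩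
        ⟨by simp, by simp [hk]⟩
    · obtain ⟨t, ht⟩ := other c.r3 h3
      exact V _ _ _ q0 _ _ _ _ (hK t) (by simp [e2]) i1 i2 ⟨by simp [e2', hu], by simp [e2', hu]⟩
        ⟨by simp, by simp [hk, ht.symm]⟩
  · have e2' : x2 ≠ w2 := fun h => e2 h.symm
    have e3' : x3 ≠ w3 := fun h => e3 h.symm
    obtain ⟨q0⟩ := c.neQ
    rcases cross (fun z u => ∃ a k, InB B (z, a) (u, k)) (by
      rintro z u z' u' ⟨a, k, i1⟩ ⟨a', k', i2⟩
      by_contra hcon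
      push Not at hcon
      exact V _ _ _ q0 _ _ _ _ (hK h3) (by simp [e2]) i1 i2
        ⟨by simp [e2', hcon.1], by simp [e2', hcon.1]⟩
        ⟨by simp [e3', hcon.2], by simp [e3', hcon.2]⟩) with hh | hh
    · exact c.lemQ good h12 fun z2 a z2' a' u k k' i1 i2 => hh _ _ _ _ ⟨_, _, i1⟩ ⟨_, _, i2⟩
    · exact c.lemP good h12 fun z2 a a' u k u' k' i1 i2 => hh _ _ _ _ ⟨_, _, i1⟩ ⟨_, _, i2⟩

theorem good_false (c : Cfg A B) (good : ∀ x1 x1' y2 y3, Bp B x1 y2 y3 = Bp B x1' y2 y3)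
    (hA : Zr 0 2 2 A) : False := by
  have dis : ∀ y2 y3 x x', Sf A x y2 y3 = 1 → Sf A x' y2 y3 = 1 → x = x' := by
    intro y2 y3 x x' e e'
    by_contra hne
    obtain ⟨y1, z2, z3, hb⟩ := c.exB
    obtain ⟨k, f⟩ := c.good_in good ⟨y1, hb⟩ x
    obtain ⟨k', f'⟩ := c.good_in good ⟨y1, hb⟩ x'
    obtain ⟨p0⟩ := c.neP
    have := c.dv _ _ _ _ _ _ _ _ _ _ _ _ (Sf_iff.1 e p0) (Sf_iff.1 e' p0) f f'
      ⟨by simp, by simp [hne]⟩ ⟨by simp, by simp⟩ ⟨by simp, by simp⟩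
    simp [hne] at this
  have hs := fun y2 y3 => sum01 (fun x => Sf01 (A := A) x y2 y3) (dis y2 y3)
  obtain ⟨s1, ⟨s2, t2⟩, ⟨s3, t3⟩, hI⟩ := c.nI
  have e1 := Sf_iff.2 hI
  have e2 : ∑ x, Sf A x (s2, t2) (s3, t3) = 1 := by
    rcases hs (s2, t2) (s3, t3) with h | h
    · have := h.2 s1
      omega
    · exact h.1
  have ex : ∀ y2 y3, ∑ x, Sf A x y2 y3 = 1 → ∃ x, Sf A x y2 y3 = 1 := by
    intro y2 y3 h
    rcases hs y2 y3 with h' | h'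
    · omega
    · exact h'.2
  rcases lined (fun a b => by
    rcases hs (s2, a) (s3, b) with h | h
    · exact Or.inl h.1
    · exact Or.inr h.1) (c.S022 hA s2 s3) with h | h
  · exact c.good2 good s2 s3 t3 fun h2 => ex _ _ (by rw [← e2]; exact h _ _ _)
  · exact c.swap23.good2 (fun x1 x1' y2 y3 => good x1 x1' y3 y2) s3 s2 t2
      fun h3 => ex _ _ (by rw [← e2]; exact h _ _ _)

end Cfg
end TC

set_option linter.unusedSectionVars false
set_option linter.unusedDecidableInType false
set_option linter.unusedFintypeInType false

namespace TC

variable {P Q R : Type} [Fintype P] [Fintype Q] [Fintype R] [DecidableEq P] [DecidableEq Q]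
  [DecidableEq R] {A B : P × P → Q × Q → R × R → ℤ}

/-- number of points of `B` over a point of the last two coordinates -/
def Bt (B : P × P → Q × Q → R × R → ℤ) (y2 : Q × Q) (y3 : R × R) : ℤ := ∑ y1, B y1 y2 y3

structure Al (A B : P × P → Q × Q → R × R → ℤ) : Prop where
  c : Cfg A B
  lq : Fintype.card P < Fintype.card Q
  lr : Fintype.card P < Fintype.card R
  inj : ∀ y1 y1' y2 y3, B y1 y2 y3 = 1 → B y1' y2 y3 = 1 → y1 = y1'
  typ : ∀ x2 x3, (∀ a a' b, Bt B (x2, a) (x3, b) = Bt B (x2, a') (x3, b)) ∨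
    (∀ a b b', Bt B (x2, a) (x3, b) = Bt B (x2, a) (x3, b'))
  s : ∃ s2 t2 s3 t3, ∀ y1, A y1 (s2, t2) (s3, t3) = 1

theorem Cfg.lines12 (c : Cfg A B) (lq : Fintype.card P < Fintype.card Q) (x2 : Q) (y3 : R × R)
    (h : ∀ h2, ∃ y1, B y1 (x2, h2) y3 = 1) {x1 x1' : P} {z2 b b' : Q} {z3 : R × R}
    (f : Sf A x1 (z2, b) z3 = 1) (f' : Sf A x1' (z2, b') z3 = 1) : b = b' := by
  by_contra hbb
  choose g hg using h
  have ginj : ∀ a a', g a = g a' → a = a' := by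
    intro a a' e
    have e1 := hg a
    rw [e] at e1
    exact c.no212 e1 (hg a')
  by_cases hx : x1 = x1'
  · subst hx
    obtain ⟨a, a', hne, e⟩ := Fintype.exists_ne_map_eq_of_card_lt (fun a => (g a).1) lq
    have e2 : (g a).2 ≠ (g a').2 := fun e2 => hne (ginj _ _ (Prod.ext e e2))
    have := c.dv _ _ _ _ _ _ _ _ _ _ _ _ (Sf_iff.1 f (g a).2) (Sf_iff.1 f' (g a').2) (hg a) (hg a')
      ⟨by simp [e], by simp [e2, Prod.ext_iff]⟩ ⟨by simp, by simp [hne, hbb]⟩ ⟨by simp, by simp⟩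
    simp [hbb] at this
  · have : ∃ a a', (g a).1 ≠ (g a').1 := by
      by_contra hcon
      push Not at hcon
      have : Function.Injective (fun a => (g a).2) := fun a a' e => ginj _ _ (Prod.ext (hcon _ _) e)
      have := Fintype.card_le_of_injective _ this
      omega
    obtain ⟨a, a', hne⟩ := this
    have hne2 : a ≠ a' := fun e => hne (by rw [e])
    have hne3 : g a ≠ g a' := fun e => hne (by rw [e])
    have := c.dv _ _ _ _ _ _ _ _ _ _ _ _ (Sf_iff.1 f (g a).2) (Sf_iff.1 f' (g a').2) (hg a) (hg a')
      ⟨by simp [hne, hx], by simp [hne3, hx]⟩ ⟨by simp, by simp [hne2, hbb]⟩ ⟨by simp, by simp⟩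
    simp [hbb] at this

theorem Cfg.getS (c : Cfg A B) (lq : Fintype.card P < Fintype.card Q) (h1 : Zr 1 2 2 A)
    (x2 : Q) (y3 : R × R)
    (h : ∀ h2, ∃ y1, B y1 (x2, h2) y3 = 1) : ∃ s2 t2 s3 t3, ∀ y1, A y1 (s2, t2) (s3, t3) = 1 := by
  have nd := fun {x1 x1' z2 b b' z3} => c.lines12 lq x2 y3 h (x1 := x1) (x1' := x1') (z2 := z2)
    (b := b) (b' := b') (z3 := z3)
  obtain ⟨s2, s3, -, x1, -, h2, h3, -, f, -⟩ := c.step1 h1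
  suffices ∀ x, Sf A x (s2, h2) (s3, h3) = 1 from
    ⟨s2, h2, s3, h3, fun y1 => Sf_iff.1 (this y1.1) y1.2⟩
  intro x
  by_contra hx
  have hF := c.S122 h1 x1 x s2 s3
  apply c.noline3 x1 (s2, h2) s3
  intro b
  by_contra hb
  have z : ∀ a, a ≠ h2 → Sf A x (s2, a) (s3, b) = 1 := by
    intro a ha
    have e := hF h2 a h3 b
    simp only at e
    have e1 : Sf A x1 (s2, a) (s3, h3) ≠ 1 := fun e => ha (nd e f)
    have e2 : Sf A x (s2, a) (s3, h3) ≠ 1 := fun e => ha (nd e f)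
    have := Sf01 (A := A) x1 (s2, a) (s3, h3)
    have := Sf01 (A := A) x (s2, a) (s3, h3)
    have := Sf01 (A := A) x (s2, h2) (s3, h3)
    have := Sf01 (A := A) x1 (s2, a) (s3, b)
    have := Sf01 (A := A) x (s2, a) (s3, b)
    have := Sf01 (A := A) x1 (s2, h2) (s3, b)
    have := Sf01 (A := A) x (s2, h2) (s3, b)
    omega
  obtain ⟨u, v, w, huv, huw, hvw⟩ := three c.q3
  by_cases e1 : u = h2
  · exact hvw (nd (z v (by rintro rfl; exact huv e1)) (z w (by rintro rfl; exact huw e1)))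
  · by_cases e2 : v = h2
    · exact huw (nd (z u e1) (z w (by rintro rfl; exact hvw e2)))
    · exact huv (nd (z u e1) (z v e2))

theorem Cfg.al (c : Cfg A B) (lq : Fintype.card P < Fintype.card Q)
    (lr : Fintype.card P < Fintype.card R) (h1 : Zr 1 2 2 A) (h0 : Zr 0 2 2 B) : Al A B := by
  have inj : ∀ y1 y1' y2 y3, B y1 y2 y3 = 1 → B y1' y2 y3 = 1 → y1 = y1' :=
    fun _ _ _ _ e e' => c.injY h1 e e'
  have hs := fun y2 y3 => Cfg.sum01 (fun y1 => c.B01 y1 y2 y3) (fun y1 y1' => inj y1 y1' y2 y3)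
  have typ : ∀ x2 x3, (∀ a a' b, Bt B (x2, a) (x3, b) = Bt B (x2, a') (x3, b)) ∨
    (∀ a b b', Bt B (x2, a) (x3, b) = Bt B (x2, a) (x3, b')) := fun x2 x3 =>
    lined (fun a b => by
      rcases hs (x2, a) (x3, b) with h | h
      · exact Or.inl h.1
      · exact Or.inr h.1) (h0.z022 x2 x3)
  refine ⟨c, lq, lr, inj, typ, ?_⟩
  obtain ⟨y1, ⟨x2, a⟩, ⟨x3, b⟩, e⟩ := c.exB
  have e1 : Bt B (x2, a) (x3, b) = 1 := by
    rcases hs (x2, a) (x3, b) with h | h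
    · have := h.2 y1
      omega
    · exact h.1
  have ex : ∀ y2 y3, Bt B y2 y3 = 1 → ∃ y1, B y1 y2 y3 = 1 := by
    intro y2 y3 h
    rcases hs y2 y3 with h' | h'
    · unfold Bt at h
      omega
    · exact h'.2
  rcases typ x2 x3 with h | h
  · exact c.getS lq h1 x2 (x3, b) fun h2 => ex _ _ (by rw [h h2 a, e1])
  · obtain ⟨s3, t3, s2, t2, hh⟩ := c.swap23.getS lr h1.swap23 x3 (x2, a)
      fun h3 => ex _ _ (by rw [h a h3 b, e1])
    exact ⟨s2, t2, s3, t3, hh⟩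

namespace Al

theorem swap (g : Al A B) : Al (fun y1 y3 y2 => A y1 y2 y3) (fun y1 y3 y2 => B y1 y2 y3) where
  c := g.c.swap23
  lq := g.lr
  lr := g.lq
  inj := fun _ _ _ _ e e' => g.inj _ _ _ _ e e'
  typ := fun x3 x2 => by
    rcases g.typ x2 x3 with h | h
    · exact Or.inr fun a b b' => h b b' a
    · exact Or.inl fun a b b' => h b' a b
  s := by
    obtain ⟨a, b, d, e, h⟩ := g.s
    exact ⟨d, e, a, b, h⟩

theorem Bt_cases (g : Al A B) (y2 : Q × Q) (y3 : R × R) :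
    (Bt B y2 y3 = 0 ∧ ¬ InB B y2 y3) ∨ (Bt B y2 y3 = 1 ∧ InB B y2 y3) := by
  rcases Cfg.sum01 (fun y1 => g.c.B01 y1 y2 y3) (fun y1 y1' => g.inj y1 y1' y2 y3) with h | h
  · refine Or.inl ⟨h.1, ?_⟩
    rintro ⟨y1, e⟩
    have := h.2 y1
    omega
  · exact Or.inr h

theorem Bt01 (g : Al A B) (y2 : Q × Q) (y3 : R × R) : Bt B y2 y3 = 0 ∨ Bt B y2 y3 = 1 := by
  rcases g.Bt_cases y2 y3 with h | h
  · exact Or.inl h.1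
  · exact Or.inr h.1

theorem Bt_iff (g : Al A B) {y2 : Q × Q} {y3 : R × R} : Bt B y2 y3 = 1 ↔ InB B y2 y3 := by
  rcases g.Bt_cases y2 y3 with h | h <;> simp [h.1, h.2]

theorem Bt_zero (g : Al A B) {y2 : Q × Q} {y3 : R × R} (h : ¬ InB B y2 y3) : Bt B y2 y3 = 0 := by
  rcases g.Bt_cases y2 y3 with h' | h'
  · exact h'.1
  · exact (h h'.2).elim

theorem V (g : Al A B) {s2 t2 : Q} {s3 t3 : R} (hC : ∀ y1, A y1 (s2, t2) (s3, t3) = 1)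
    {y1 : P × P} {y2 : Q × Q} {y3 : R × R} {z2 z3 z2' z3'} (hA : A y1 y2 y3 = 1)
    (hne : y2 = (s2, t2) → y3 ≠ (s3, t3)) (i1 : InB B z2 z3) (i2 : InB B z2' z3')
    (r2 : Rel (s2, t2) y2 z2 z2') (r3 : Rel (s3, t3) y3 z3 z3') : False := by
  obtain ⟨⟨u, k⟩, e⟩ := i1
  obtain ⟨⟨u', k'⟩, e'⟩ := i2
  obtain ⟨w, b⟩ := y1
  by_cases hu : u = u'
  · subst hu
    by_cases hk : k = k'
    · have := g.c.dv _ _ _ _ _ _ _ _ _ _ _ _ (hC (w, b)) hA e e' ⟨by simp, by simp [hk]⟩ r2 r3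
      exact hne this.2.1.symm this.2.2.symm
    · obtain ⟨b', hb'⟩ := other g.c.p3 b
      have := g.c.dv _ _ _ _ _ _ _ _ _ _ _ _ (hC (w, b')) hA e e' ⟨by simp, by simp [hk, hb']⟩ r2 r3
      exact hne this.2.1.symm this.2.2.symm
  · obtain ⟨w', hw'⟩ := other g.c.p3 w
    have := g.c.dv _ _ _ _ _ _ _ _ _ _ _ _ (hC (w', b)) hA e e' ⟨by simp [hu, hw'],
      by simp [hu, hw']⟩ r2 r3
    exact hne this.2.1.symm this.2.2.symm

theorem total (g : Al A B) : ∑ y2, ∑ y3, Bt B y2 y3 =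
    (Fintype.card P : ℤ) * Fintype.card Q * Fintype.card R := by
  rw [← g.c.cB]
  simp only [Bt]
  conv_rhs => rw [Finset.sum_comm]
  refine Finset.sum_congr rfl fun y2 _ => ?_
  rw [Finset.sum_comm]

/-- one coordinate marginal cannot be balanced for `B` -/
theorem not001 (g : Al A B) (hM : ∀ x3 h h', ∑ y2, Bt B y2 (x3, h) = ∑ y2, Bt B y2 (x3, h')) :
    ¬ Zr 0 0 1 B := by
  intro hz
  have c := g.c
  obtain ⟨r0⟩ := c.neR
  have hM' : ∀ x h, ∑ y2, Bt B y2 (x, h) = ∑ y2, Bt B y2 (x, r0) := fun x h => hM _ _ _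
  have key : ∀ x, ∑ y2, Bt B y2 (x, r0) = ∑ y2, Bt B y2 (r0, r0) := by
    intro x
    have h1 := hz (fun _ => 1) (fun _ => 1) _ (fun _ _ => rfl) (fun _ _ => rfl) (tst_dl1 x r0)
    simp only [sum_dl1, one_mul, Finset.sum_sub_distrib] at h1
    have h2 : ∀ x, ∑ y1, ∑ y2, ∑ h, B y1 y2 (x, h) = Fintype.card R * ∑ y2, Bt B y2 (x, r0) := by
      intro x
      have : ∑ y1, ∑ y2, ∑ h, B y1 y2 (x, h) = ∑ h, ∑ y2, Bt B y2 (x, h) := by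
        simp only [Bt]
        rw [Finset.sum_comm]
        conv_rhs => rw [Finset.sum_comm]
        refine Finset.sum_congr rfl fun y2 _ => ?_
        rw [Finset.sum_comm]
      rw [this]
      simp only [hM' x]
      simp
    rw [h2, h2, ← mul_sub] at h1
    rcases mul_eq_zero.1 h1 with h | h
    · have := c.r3
      norm_cast at h
      omega
    · linarith
  have ht := g.total
  rw [Finset.sum_comm, Fintype.sum_prod_type] at ht
  simp only [hM'] at ht
  simp only [key] at ht
  simp only [Finset.sum_const, Finset.card_univ, nsmul_eq_mul] at ht
  have hr : (Fintype.card R : ℤ) ≠ 0 := by exact_mod_cast c.pR.ne_zero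
  have : (Fintype.card P : ℤ) * Fintype.card Q = Fintype.card R * ∑ y2, Bt B y2 (r0, r0) :=
    mul_left_cancel₀ hr (by linarith)
  have hd : (Fintype.card R : ℤ) ∣ (Fintype.card P * Fintype.card Q : ℕ) := ⟨_, by push_cast; exact this⟩
  have hd' : Fintype.card R ∣ Fintype.card P * Fintype.card Q := by exact_mod_cast hd
  rcases (Nat.Prime.dvd_mul c.pR).1 hd' with h | h
  · exact c.pr ((Nat.prime_dvd_prime_iff_eq c.pR c.pP).1 h).symm
  · exact c.qr ((Nat.prime_dvd_prime_iff_eq c.pR c.pQ).1 h).symm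

/-- column counts -/
def _root_.TC.cnt (F : P × P → Q × Q → R × R → ℤ) (x2 : Q) (x3 : R) : ℤ :=
  ∑ h2, ∑ h3, ∑ y1, F y1 (x2, h2) (x3, h3)

theorem z011 {F : P × P → Q × Q → R × R → ℤ} (hz : Zr 0 1 1 F) : Alt (cnt F) := by
  intro a a' b b'
  have h1 := hz (fun _ => 1) _ _ (fun _ _ => rfl) (tst_dl1 a a') (tst_dl1 b b')
  simp only [sum_dl1, one_mul, Finset.sum_sub_distrib] at h1
  have h2 : ∀ x2 x3, ∑ y1, ∑ h2, ∑ h3, F y1 (x2, h2) (x3, h3) = cnt F x2 x3 := by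
    intro x2 x3
    unfold cnt
    rw [Finset.sum_comm]
    refine Finset.sum_congr rfl fun y2 _ => ?_
    rw [Finset.sum_comm]
  rw [h2, h2, h2, h2] at h1
  linarith

theorem z001 {F : P × P → Q × Q → R × R → ℤ} (hz : Zr 0 0 1 F) (b b' : R) :
    ∑ a, cnt F a b = ∑ a, cnt F a b' := by
  have h1 := hz (fun _ => 1) (fun _ => 1) _ (fun _ _ => rfl) (fun _ _ => rfl) (tst_dl1 b b')
  simp only [sum_dl1, one_mul, Finset.sum_sub_distrib] at h1
  have h2 : ∀ b, ∑ y1, ∑ y2, ∑ h3, F y1 y2 (b, h3) = ∑ a, cnt F a b := by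
    intro x3
    unfold cnt
    rw [Finset.sum_comm, Fintype.sum_prod_type]
    refine Finset.sum_congr rfl fun x2 _ => ?_
    refine Finset.sum_congr rfl fun h2 _ => ?_
    rw [Finset.sum_comm]
  rw [h2, h2] at h1
  linarith

theorem cnt_swap (F : P × P → Q × Q → R × R → ℤ) (x2 : Q) (x3 : R) :
    cnt (fun y1 y3 y2 => F y1 y2 y3) x3 x2 = cnt F x2 x3 := by
  unfold cnt
  rw [Finset.sum_comm]

theorem cnt_total (F : P × P → Q × Q → R × R → ℤ) :
    ∑ x2, ∑ x3, cnt F x2 x3 = ∑ y1, ∑ y2, ∑ y3, F y1 y2 y3 := by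
  have h1 : ∑ y1, ∑ y2, ∑ y3, F y1 y2 y3 = ∑ y2, ∑ y3, ∑ y1, F y1 y2 y3 := by
    rw [Finset.sum_comm]
    refine Finset.sum_congr rfl fun y2 _ => ?_
    rw [Finset.sum_comm]
  rw [h1, Fintype.sum_prod_type]
  refine Finset.sum_congr rfl fun x2 _ => ?_
  unfold cnt
  rw [Finset.sum_comm]
  refine Finset.sum_congr rfl fun h2 _ => ?_
  rw [Fintype.sum_prod_type]

theorem finish (g : Al A B) (hM3 : ∀ x3 h h', ∑ y2, Bt B y2 (x3, h) = ∑ y2, Bt B y2 (x3, h'))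
    (hM2 : ∀ x2 h h', ∑ y3, Bt B (x2, h) y3 = ∑ y3, Bt B (x2, h') y3)
    (h011 : ¬ Zr 0 1 1 B) : False := by
  have c := g.c
  have a011 := (c.zr 0 1 1 (by omega) (by omega) (by omega) (by omega)).resolve_right h011
  have a001 := (c.zr 0 0 1 (by omega) (by omega) (by omega) (by omega)).resolve_right (g.not001 hM3)
  have a010 := (c.zr 0 1 0 (by omega) (by omega) (by omega) (by omega)).resolve_right
    fun h => g.swap.not001 hM2 h.swap23
  obtain ⟨s2, t2, s3, t3, hC⟩ := g.s
  have e1 : ∀ b b' a, cnt A a b = cnt A a b' := by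
    intro b b' a
    have h1 := z001 a001 b b'
    have h2 : ∀ x, cnt A x b - cnt A x b' = cnt A a b - cnt A a b' := fun x => by
      have := z011 a011 x a b b'
      linarith
    have h3 : ∑ x, (cnt A x b - cnt A x b') = 0 := by
      rw [Finset.sum_sub_distrib, h1, sub_self]
    simp only [h2] at h3
    simp only [Finset.sum_const, Finset.card_univ, nsmul_eq_mul] at h3
    rcases mul_eq_zero.1 h3 with h | h
    · exact absurd h (by exact_mod_cast c.pQ.ne_zero)
    · linarith
  have e2 : ∀ a a' b, cnt A a b = cnt A a' b := by
    intro b b' a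
    have h1 := z001 a010.swap23 b b'
    simp only [cnt_swap] at h1
    have h2 : ∀ x, cnt A b x - cnt A b' x = cnt A b a - cnt A b' a := fun x => by
      have := z011 a011 b b' x a
      linarith
    have h3 : ∑ x, (cnt A b x - cnt A b' x) = 0 := by
      rw [Finset.sum_sub_distrib, h1, sub_self]
    simp only [h2] at h3
    simp only [Finset.sum_const, Finset.card_univ, nsmul_eq_mul] at h3
    rcases mul_eq_zero.1 h3 with h | h
    · exact absurd h (by exact_mod_cast c.pR.ne_zero)
    · linarith
  have e3 : ∀ a b, cnt A a b = cnt A s2 s3 := fun a b => by rw [e1 b s3, e2 a s2]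
  have ht := cnt_total A
  rw [c.cA] at ht
  simp only [e3] at ht
  simp only [Finset.sum_const, Finset.card_univ, nsmul_eq_mul] at ht
  have hq : (Fintype.card Q : ℤ) ≠ 0 := by exact_mod_cast c.pQ.ne_zero
  have hr : (Fintype.card R : ℤ) ≠ 0 := by exact_mod_cast c.pR.ne_zero
  have h5 : cnt A s2 s3 = Fintype.card P :=
    mul_left_cancel₀ hr (mul_left_cancel₀ hq (by linarith))
  have h6 : (Fintype.card (P × P) : ℤ) ≤ cnt A s2 s3 := by
    have nn : ∀ y1 y2 y3, 0 ≤ A y1 y2 y3 := fun y1 y2 y3 => by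
      rcases c.A01 y1 y2 y3 with h | h <;> omega
    unfold cnt
    calc (Fintype.card (P × P) : ℤ) = ∑ y1, A y1 (s2, t2) (s3, t3) := by simp [hC]
      _ ≤ ∑ h3, ∑ y1, A y1 (s2, t2) (s3, h3) :=
        Finset.single_le_sum (f := fun h3 => ∑ y1, A y1 (s2, t2) (s3, h3))
          (fun _ _ => Finset.sum_nonneg fun _ _ => nn _ _ _) (Finset.mem_univ t3)
      _ ≤ _ :=
        Finset.single_le_sum (f := fun h2 => ∑ h3, ∑ y1, A y1 (s2, h2) (s3, h3))
          (fun _ _ => Finset.sum_nonneg fun _ _ => Finset.sum_nonneg fun _ _ => nn _ _ _)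
          (Finset.mem_univ t2)
  rw [h5, Fintype.card_prod] at h6
  have := c.p3
  have h7 : Fintype.card P * Fintype.card P ≤ Fintype.card P := by exact_mod_cast h6
  nlinarith

end Al
end TC

set_option linter.unusedSectionVars false
set_option linter.unusedDecidableInType false
set_option linter.unusedFintypeInType false

namespace TC

variable {P Q R : Type} [Fintype P] [Fintype Q] [Fintype R] [DecidableEq P] [DecidableEq Q]
  [DecidableEq R] {A B : P × P → Q × Q → R × R → ℤ}

theorem small {p q : ℕ} (hp : p.Prime) (hq : q.Prime) (hpq : p ≠ q) {x : ℤ} (h : (p : ℤ) ∣ q * x)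
    (lo : -p < x) (hi : x < p) : x = 0 := by
  rcases (Nat.prime_iff_prime_int.1 hp).dvd_or_dvd h with h | h
  · exact absurd ((Nat.prime_dvd_prime_iff_eq hp hq).1 (by exact_mod_cast h)) hpq
  · exact Int.eq_zero_of_abs_lt_dvd h (abs_lt.2 ⟨lo, hi⟩)

theorem ndvd {p q r : ℕ} (hp : p.Prime) (hq : q.Prime) (hr : r.Prime) (hpq : q ≠ p) (hpr : q ≠ r)
    {x : ℤ} (h : (p : ℤ) * r = q * x) : False := by
  have hd : (q : ℤ) ∣ ((p * r : ℕ) : ℤ) := ⟨x, by push_cast; exact h⟩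
  have hd' : q ∣ p * r := by exact_mod_cast hd
  rcases (Nat.Prime.dvd_mul hq).1 hd' with h | h
  · exact hpq ((Nat.prime_dvd_prime_iff_eq hq hp).1 h)
  · exact hpr ((Nat.prime_dvd_prime_iff_eq hq hr).1 h)

namespace Al

def D3a (B : P × P → Q × Q → R × R → ℤ) : Prop := ∀ x2 h h' x3 x3', (Fintype.card P : ℤ) ∣
  (∑ k, Bt B (x2, h) (x3, k) - ∑ k, Bt B (x2, h) (x3', k)) -
  (∑ k, Bt B (x2, h') (x3, k) - ∑ k, Bt B (x2, h') (x3', k))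

def D3b (B : P × P → Q × Q → R × R → ℤ) : Prop :=
  (∀ x2 h h', (Fintype.card P : ℤ) ∣ ∑ y3, Bt B (x2, h) y3 - ∑ y3, Bt B (x2, h') y3) ∧
  ∀ y2, ∑ y3, Bt B y2 y3 ≤ Fintype.card P * Fintype.card P

theorem mod3 (g : Al A B) : D3a B ∨ D3b B := by
  have c := g.c
  have c3 := c.rot3
  by_cases hz : Zr 1 2 2 (fun y3 y1 y2 => B y1 y2 y3)
  · left
    intro x2 h h' x3 x3'
    have h1 := Finset.dvd_sum fun x1 (_ : x1 ∈ Finset.univ) => (hz.z122 x3 x3' x1 x2).dvd h h'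
    have e : ∀ h x3, ∑ k, Bt B (x2, h) (x3, k) = ∑ x1, ∑ h1, ∑ k, B (x1, h1) (x2, h) (x3, k) := by
      intro h x3
      unfold Bt
      rw [Finset.sum_comm, Fintype.sum_prod_type]
    simp only [Finset.sum_sub_distrib] at h1
    rw [e, e, e, e]
    exact h1
  · right
    have a1 := (c3.zr 1 2 2 (by omega) (by omega) (by omega) (by omega)).resolve_right hz
    have b0 := (c3.zr 0 2 2 (by omega) (by omega) (by omega) (by omega)).resolve_left
      fun h => c3.lemN a1 h
    constructor
    · intro x2 h h'
      have h1 := Finset.dvd_sum fun x1 (_ : x1 ∈ Finset.univ) => (b0.z022 x1 x2).dvd h h'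
      have e : ∀ h, ∑ y3, Bt B (x2, h) y3 = ∑ x1, ∑ h1, ∑ y3, B (x1, h1) (x2, h) y3 := by
        intro h
        unfold Bt
        rw [Finset.sum_comm, Fintype.sum_prod_type]
      simp only [Finset.sum_sub_distrib] at h1
      rw [e, e]
      exact h1
    · intro y2
      unfold Bt
      have := cnt_le (X := (R × R) × (P × P)) (Y := P × P) (f := fun p => B p.2 y2 p.1)
        (fun _ => c.B01 _ _ _) (fun p => p.2) (by
          rintro ⟨y3, y1⟩ ⟨y3', y1'⟩ e e' h
          simp only at e e' h
          subst h
          rw [c3.injY a1 e e'])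
      rw [Fintype.sum_prod_type, Fintype.card_prod] at this
      exact_mod_cast this

/-- if all columns over `x3` are of type two and `D3b` holds for the swap then counts are constant -/
theorem constM (g : Al A B) (hD : D3b (fun y1 y3 y2 => B y1 y2 y3)) (x3 : R)
    (ht : ∀ x2 a a' b, Bt B (x2, a) (x3, b) = Bt B (x2, a') (x3, b)) (h h' : R) :
    ∑ y2, Bt B y2 (x3, h) = ∑ y2, Bt B y2 (x3, h') := by
  have c := g.c
  obtain ⟨q0⟩ := c.neQ
  have e : ∀ h, ∑ y2, Bt B y2 (x3, h) = Fintype.card Q * ∑ x2, Bt B (x2, q0) (x3, h) := by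
    intro h
    rw [Fintype.sum_prod_type]
    simp only [ht _ _ q0]
    simp [Finset.mul_sum]
  have hd := hD.1 x3 h h'
  change _ ∣ ∑ y2, Bt B y2 (x3, h) - ∑ y2, Bt B y2 (x3, h') at hd
  have hb := fun h => hD.2 (x3, h)
  change ∀ h, ∑ y2, Bt B y2 (x3, h) ≤ _ at hb
  have hpq := g.lq
  have lt : ∀ h, ∑ x2, Bt B (x2, q0) (x3, h) < Fintype.card P := by
    intro h
    have h1 := hb h
    rw [e] at h1
    by_contra hcon
    push Not at hcon
    have h2 : (Fintype.card P : ℤ) < Fintype.card Q := by exact_mod_cast hpq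
    have h3 : (0 : ℤ) < Fintype.card P := by exact_mod_cast c.pP.pos
    nlinarith
  have nn : ∀ h, 0 ≤ ∑ x2, Bt B (x2, q0) (x3, h) := fun h => Finset.sum_nonneg fun x _ => by
    rcases g.Bt01 (x, q0) (x3, h) with h | h <;> omega
  rw [e, e, ← mul_sub] at hd
  have := small c.pP c.pQ c.pq hd (by linarith [lt h', nn h]) (by linarith [lt h, nn h'])
  rw [e, e, show ∑ x2, Bt B (x2, q0) (x3, h) = ∑ x2, Bt B (x2, q0) (x3, h') by linarith]

theorem inB_cnt (g : Al A B) {x2 : Q} {a : Q} {x3 b : R} (h : InB B (x2, a) (x3, b)) :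
    0 < cnt B x2 x3 := by
  have nn : ∀ y2 y3, 0 ≤ Bt B y2 y3 := fun y2 y3 => by
    rcases g.Bt01 y2 y3 with h | h <;> omega
  have h1 := g.Bt_iff.2 h
  have : Bt B (x2, a) (x3, b) ≤ cnt B x2 x3 := by
    calc _ ≤ ∑ b, Bt B (x2, a) (x3, b) :=
          Finset.single_le_sum (f := fun b => Bt B (x2, a) (x3, b)) (fun _ _ => nn _ _)
            (Finset.mem_univ b)
      _ ≤ _ := Finset.single_le_sum (f := fun a => ∑ b, Bt B (x2, a) (x3, b))
          (fun _ _ => Finset.sum_nonneg fun _ _ => nn _ _) (Finset.mem_univ a)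
  omega

theorem cnt_inB (g : Al A B) {x2 : Q} {x3 : R} (h : 0 < cnt B x2 x3) :
    ∃ a b, InB B (x2, a) (x3, b) := by
  by_contra hc
  push Not at hc
  have : cnt B x2 x3 = 0 := Finset.sum_eq_zero fun a _ => Finset.sum_eq_zero fun b _ =>
    g.Bt_zero (hc a b)
  omega

theorem cnt_nn (g : Al A B) (x2 : Q) (x3 : R) : 0 ≤ cnt B x2 x3 :=
  Finset.sum_nonneg fun a _ => Finset.sum_nonneg fun b _ => by
    have := g.Bt01 (x2, a) (x3, b)
    change 0 ≤ Bt B (x2, a) (x3, b)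
    omega

theorem lemA (g : Al A B) (hA : ∀ z2 a a' u k u' k', InB B (z2, a) (u, k) →
    InB B (z2, a') (u', k') → u = u') : False := by
  have c := g.c
  obtain ⟨q0⟩ := c.neQ
  obtain ⟨r0⟩ := c.neR
  have hpl : (3 : ℤ) ≤ Fintype.card P := by exact_mod_cast c.p3
  have T2 : ∀ x2 x3 a a' b, Bt B (x2, a) (x3, b) = Bt B (x2, a') (x3, b) := by
    intro x2 x3
    rcases g.typ x2 x3 with ht | ht
    · exact ht
    · by_cases hne : ∃ a b, InB B (x2, a) (x3, b)
      · obtain ⟨a0, b0, hab⟩ := hne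
        have z : ∀ x3' a b, x3' ≠ x3 → Bt B (x2, a) (x3', b) = 0 := fun x3' a b hne =>
          g.Bt_zero fun h => hne (hA _ _ _ _ _ _ _ h hab)
        have e : ∀ a, ∑ k, Bt B (x2, a) (x3, k) = Fintype.card R * Bt B (x2, a) (x3, r0) := by
          intro a
          simp only [ht a _ r0]
          simp
        intro a a' b
        rw [ht a b r0, ht a' b r0]
        have fin1 : (Fintype.card P : ℤ) ∣ Fintype.card R * (Bt B (x2, a) (x3, r0) -
            Bt B (x2, a') (x3, r0)) → Bt B (x2, a) (x3, r0) = Bt B (x2, a') (x3, r0) := by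
          intro hd
          have h1 := g.Bt01 (x2, a) (x3, r0)
          have h2 := g.Bt01 (x2, a') (x3, r0)
          have := small c.pP c.pR c.pr hd (by omega) (by omega)
          omega
        apply fin1
        rcases g.mod3 with h | h
        · obtain ⟨x3', hx3'⟩ := other c.r3 x3
          have := h x2 a a' x3 x3'
          simp only [z x3' _ _ hx3', e] at this
          simpa [mul_sub] using this
        · have := h.1 x2 a a'
          have e2 : ∀ a, ∑ y3, Bt B (x2, a) y3 = ∑ k, Bt B (x2, a) (x3, k) := by
            intro a
            rw [Fintype.sum_prod_type]
            apply Finset.sum_eq_single x3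
            · intro x3' _ hne
              exact Finset.sum_eq_zero fun b _ => z _ _ _ hne
            · simp
          rw [e2, e2, e, e, ← mul_sub] at this
          exact this
      · push Not at hne
        intro a a' b
        rw [g.Bt_zero (hne a b), g.Bt_zero (hne a' b)]
  have hM2 : ∀ x2 h h', ∑ y3, Bt B (x2, h) y3 = ∑ y3, Bt B (x2, h') y3 := by
    intro x2 h h'
    exact Finset.sum_congr rfl fun y3 _ => T2 _ _ _ _ _
  have hM3 : ∀ x3 h h', ∑ y2, Bt B y2 (x3, h) = ∑ y2, Bt B y2 (x3, h') := by
    rcases g.swap.mod3 with hD | hD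
    · intro x3
      have eq : ∀ x2 x2' h h', Bt B (x2, q0) (x3, h) - Bt B (x2', q0) (x3, h) =
          Bt B (x2, q0) (x3, h') - Bt B (x2', q0) (x3, h') := by
        intro x2 x2' h h'
        have := hD x3 h h' x2 x2'
        change _ ∣ (∑ a, Bt B (x2, a) (x3, h) - ∑ a, Bt B (x2', a) (x3, h)) -
          (∑ a, Bt B (x2, a) (x3, h') - ∑ a, Bt B (x2', a) (x3, h')) at this
        simp only [T2 _ _ _ q0] at this
        simp only [Finset.sum_const, Finset.card_univ, nsmul_eq_mul, ← mul_sub] at this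
        have e1 := g.Bt01 (x2, q0) (x3, h)
        have e2 := g.Bt01 (x2', q0) (x3, h)
        have e3 := g.Bt01 (x2, q0) (x3, h')
        have e4 := g.Bt01 (x2', q0) (x3, h')
        have := small c.pP c.pQ c.pq this (by omega) (by omega)
        omega
      by_cases hcst : ∀ x2 h h', Bt B (x2, q0) (x3, h) = Bt B (x2, q0) (x3, h')
      · intro h h'
        refine Finset.sum_congr rfl fun y2 _ => ?_
        obtain ⟨x2, a⟩ := y2
        rw [T2 _ _ a q0, T2 _ _ a q0]
        exact hcst _ _ _
      · exfalso
        obtain ⟨x2, h, h', h1, h0⟩ : ∃ x2 h h', Bt B (x2, q0) (x3, h) = 1 ∧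
            Bt B (x2, q0) (x3, h') = 0 := by
          push Not at hcst
          obtain ⟨x2, h, h', hne⟩ := hcst
          have e1 := g.Bt01 (x2, q0) (x3, h)
          have e2 := g.Bt01 (x2, q0) (x3, h')
          rcases e1 with e1 | e1
          · exact ⟨x2, h', h, by omega, e1⟩
          · exact ⟨x2, h, h', e1, by omega⟩
        have all1 : ∀ x, Bt B (x, q0) (x3, h) = 1 := by
          intro x
          have := eq x2 x h h'
          have e2 := g.Bt01 (x, q0) (x3, h)
          have e4 := g.Bt01 (x, q0) (x3, h')
          omega
        have alleq : ∀ x h', Bt B (x, q0) (x3, h') = Bt B (x2, q0) (x3, h') := by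
          intro x h'
          have := eq x x2 h h'
          rw [all1, all1] at this
          omega
        have ht := g.total
        have h3 : ∀ y2, ∑ y3, Bt B y2 y3 = ∑ k, Bt B (x2, q0) (x3, k) := by
          rintro ⟨x, a⟩
          rw [Fintype.sum_prod_type, Finset.sum_eq_single x3]
          · refine Finset.sum_congr rfl fun k _ => ?_
            rw [T2 _ _ a q0, alleq]
          · intro x3' _ hne
            refine Finset.sum_eq_zero fun b _ => g.Bt_zero fun hh => hne ?_
            exact hA _ _ _ _ _ _ _ hh (g.Bt_iff.1 (all1 x))
          · simp
        simp only [h3] at ht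
        simp only [Finset.sum_const, Finset.card_univ, nsmul_eq_mul, Fintype.card_prod] at ht
        push_cast at ht
        have hq : (Fintype.card Q : ℤ) ≠ 0 := by exact_mod_cast c.pQ.ne_zero
        exact ndvd c.pP c.pQ c.pR c.pq.symm c.qr (x := ∑ k, Bt B (x2, q0) (x3, k))
          (mul_left_cancel₀ hq (by linarith))
    · intro x3 h h'
      exact g.constM hD x3 (fun x2 => T2 x2 x3) h h'
  apply g.finish hM3 hM2
  intro hz
  have hn := z011 hz
  obtain ⟨y1, ⟨x2, a⟩, ⟨x3, b⟩, hb⟩ := c.exB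
  have hpos := g.inB_cnt ⟨y1, hb⟩
  have zero : ∀ x2 x3 x3', 0 < cnt B x2 x3 → x3' ≠ x3 → cnt B x2 x3' = 0 := by
    intro x2 x3 x3' h hne
    by_contra h0
    have := g.cnt_nn x2 x3'
    obtain ⟨a, b, i1⟩ := g.cnt_inB h
    obtain ⟨a', b', i2⟩ := g.cnt_inB (show 0 < cnt B x2 x3' by omega)
    exact hne (hA _ _ _ _ _ _ _ i2 i1)
  have pos : ∀ x, 0 < cnt B x x3 := by
    intro x
    obtain ⟨x3', hne⟩ := other c.r3 x3
    have h1 := hn x2 x x3 x3'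
    have h2 := zero _ _ _ hpos hne
    have := g.cnt_nn x x3'
    omega
  have eqn : ∀ x, ∑ u, cnt B x u = cnt B x2 x3 := by
    intro x
    rw [Finset.sum_eq_single x3]
    · obtain ⟨x3', hne⟩ := other c.r3 x3
      have h1 := hn x2 x x3 x3'
      have h2 := zero _ _ _ hpos hne
      have h3 := zero _ _ _ (pos x) hne
      omega
    · intro u _ hne
      exact zero _ _ _ (pos x) hne
    · simp
  have ht := cnt_total B
  rw [c.cB] at ht
  simp only [eqn] at ht
  have hcq : cnt B x2 x3 = Fintype.card Q * ∑ k, Bt B (x2, q0) (x3, k) := by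
    change ∑ a, ∑ b, Bt B (x2, a) (x3, b) = _
    simp only [T2 x2 x3 _ q0]
    simp
  rw [hcq] at ht
  simp only [Finset.sum_const, Finset.card_univ, nsmul_eq_mul] at ht
  have hq : (Fintype.card Q : ℤ) ≠ 0 := by exact_mod_cast c.pQ.ne_zero
  exact ndvd c.pP c.pQ c.pR c.pq.symm c.qr (x := ∑ k, Bt B (x2, q0) (x3, k))
    (mul_left_cancel₀ hq (by linarith))

theorem lemA' (g : Al A B) (hA : ∀ z2 a z2' a' u k k', InB B (z2, a) (u, k) →
    InB B (z2', a') (u, k') → z2 = z2') : False :=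
  g.swap.lemA fun _ _ _ _ _ _ _ i1 i2 => hA _ _ _ _ _ _ _ i1 i2

def C3 (B : P × P → Q × Q → R × R → ℤ) : Prop := ∀ z2 a u, (∀ k, InB B (z2, a) (u, k)) →
  ∀ z2' a' k', InB B (z2', a') (u, k') → z2' = z2

/-- a column which is not of type two contains a full line -/
theorem not2 (g : Al A B) {x2 : Q} {x3 : R}
    (h : ¬ ∀ a a' b, Bt B (x2, a) (x3, b) = Bt B (x2, a') (x3, b)) :
    (∀ a b b', Bt B (x2, a) (x3, b) = Bt B (x2, a) (x3, b')) ∧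
    ∃ a, ∀ k, InB B (x2, a) (x3, k) := by
  have ht := (g.typ x2 x3).resolve_left h
  refine ⟨ht, ?_⟩
  by_contra hc
  push Not at hc
  apply h
  have : ∀ a b, Bt B (x2, a) (x3, b) = 0 := by
    intro a b
    obtain ⟨k, hk⟩ := hc a
    rw [ht a b k, g.Bt_zero hk]
  intro a a' b
  rw [this, this]

theorem caseD3a (g : Al A B) (h3 : C3 B) (h2 : C3 (fun y1 y3 y2 => B y1 y2 y3)) (hD : D3a B) :
    False := by
  have c := g.c
  obtain ⟨r0⟩ := c.neR
  have hpl : (3 : ℤ) ≤ Fintype.card P := by exact_mod_cast c.p3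
  by_cases hall : ∀ x2 x3 a a' b, Bt B (x2, a) (x3, b) = Bt B (x2, a') (x3, b)
  · apply g.lemA
    intro z2 a a' u k u' k' i1 i2
    refine (h2 u k z2 (fun t => ?_) _ _ _ i2).symm
    exact g.Bt_iff.1 (by rw [hall z2 u t a, g.Bt_iff.2 i1])
  · simp only [not_forall] at hall
    obtain ⟨x2, x3, a, a', b, hne⟩ := hall
    have h1 : ¬ ∀ a a' b, Bt B (x2, a) (x3, b) = Bt B (x2, a') (x3, b) := fun h => hne (h _ _ _)
    have ht := (g.not2 h1).1
    have e : ∀ a, ∑ k, Bt B (x2, a) (x3, k) = Fintype.card R * Bt B (x2, a) (x3, b) := by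
      intro a
      simp only [ht a _ b]
      simp
    have all : ∀ u, ¬ ∀ a a' b, Bt B (x2, a) (u, b) = Bt B (x2, a') (u, b) := by
      intro u hu
      have hd := hD x2 a a' x3 u
      simp only [hu a a'] at hd
      rw [e, e, sub_sub_sub_cancel_right, ← mul_sub] at hd
      have e1 := g.Bt01 (x2, a) (x3, b)
      have e2 := g.Bt01 (x2, a') (x3, b)
      have := small c.pP c.pR c.pr hd (by omega) (by omega)
      omega
    have one : ∀ z2 a u k, InB B (z2, a) (u, k) → z2 = x2 := by
      intro z2 a u k i
      obtain ⟨a0, h0⟩ := (g.not2 (all u)).2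
      exact h3 x2 a0 u h0 _ _ _ i
    exact g.lemA' fun z2 a z2' a' u k k' i1 i2 => (one _ _ _ _ i1).trans (one _ _ _ _ i2).symm

theorem constM' (g : Al A B) (h3 : C3 B) (hD : D3b (fun y1 y3 y2 => B y1 y2 y3)) (x3 : R)
    (h h' : R) : ∑ y2, Bt B y2 (x3, h) = ∑ y2, Bt B y2 (x3, h') := by
  by_cases hall : ∀ x2 a a' b, Bt B (x2, a) (x3, b) = Bt B (x2, a') (x3, b)
  · exact g.constM hD x3 hall h h'
  · rw [not_forall] at hall
    obtain ⟨x2, hn⟩ := hall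
    obtain ⟨ht, a0, h0⟩ := g.not2 hn
    have := h3 x2 a0 x3 h0
    refine Finset.sum_congr rfl fun y2 _ => ?_
    obtain ⟨x, a⟩ := y2
    by_cases hx : x = x2
    · subst hx
      exact ht _ _ _
    · rw [g.Bt_zero fun i => hx (this _ _ _ i), g.Bt_zero fun i => hx (this _ _ _ i)]

theorem caseC (g : Al A B) (h3 : C3 B) (h2 : C3 (fun y1 y3 y2 => B y1 y2 y3)) : False := by
  have c := g.c
  rcases g.mod3 with hD | hD
  · exact g.caseD3a h3 h2 hD
  rcases g.swap.mod3 with hD' | hD'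
  · exact g.swap.caseD3a h2 h3 hD'
  apply g.finish (g.constM' h3 hD') (g.swap.constM' h2 hD)
  intro hz
  have hn := z011 hz
  have alone : ∀ x2 x3, 0 < cnt B x2 x3 → (∀ x3', 0 < cnt B x2 x3' → x3' = x3) ∨
      (∀ x2', 0 < cnt B x2' x3 → x2' = x2) := by
    intro x2 x3 hpos
    obtain ⟨a, b, i⟩ := g.cnt_inB hpos
    have hb := g.Bt_iff.2 i
    rcases g.typ x2 x3 with ht | ht
    · left
      intro x3' hp'
      obtain ⟨a', b', i'⟩ := g.cnt_inB hp'
      exact h2 x3 b x2 (fun k => g.Bt_iff.1 (by rw [ht k a, hb])) _ _ _ i'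
    · right
      intro x2' hp'
      obtain ⟨a', b', i'⟩ := g.cnt_inB hp'
      exact h3 x2 a x3 (fun k => g.Bt_iff.1 (by rw [ht a k b, hb])) _ _ _ i'
  have bad : ∀ x2 x2' x3 x3', x2 ≠ x2' → x3 ≠ x3' → 0 < cnt B x2 x3 → 0 < cnt B x2' x3 →
      0 < cnt B x2' x3' → False := by
    intro x2 x2' x3 x3' n2 n3 p1 p2 p3
    rcases alone _ _ p2 with h | h
    · exact n3 (h _ p3).symm
    · exact n2 (h _ p1)
  rcases cross (fun x2 x3 => 0 < cnt B x2 x3) (by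
    intro x2 x3 x2' x3' p1 p2
    by_contra hcon
    push Not at hcon
    have h1 := hn x2 x2' x3 x3'
    have n1 := g.cnt_nn x2 x3'
    have n2 := g.cnt_nn x2' x3
    by_cases hp : 0 < cnt B x2' x3
    · exact bad _ _ _ _ hcon.1 hcon.2 p1 hp p2
    · exact bad _ _ _ _ (Ne.symm hcon.1) (Ne.symm hcon.2) p2 (by omega) p1) with hh | hh
  · exact g.lemA' fun z2 a z2' a' u k k' i1 i2 => hh _ _ _ _ (g.inB_cnt i1) (g.inB_cnt i2)
  · exact g.lemA fun z2 a a' u k u' k' i1 i2 => hh _ _ _ _ (g.inB_cnt i1) (g.inB_cnt i2)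

theorem getC3 (g : Al A B) : C3 B := by
  have c := g.c
  obtain ⟨s2, t2, s3, t3, hC⟩ := g.s
  obtain ⟨y1, z2, ⟨z3, k⟩, hJ⟩ := c.nJ
  by_cases e2 : z2 = s2 <;> by_cases e3 : z3 = s3
  · subst e2 e3
    obtain ⟨w, b⟩ := y1
    exfalso
    have := c.gridI (fun h1 => hC (w, h1)) (hJ t2)
    exact c.dIJ (w, b) (z2, t2) (z3, k) ⟨this, hJ⟩
  · subst e2
    exfalso
    apply g.lemA
    intro x2 a a' u k1 u' k' i1 i2
    by_contra hu
    have e3' : s3 ≠ z3 := fun h => e3 h.symm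
    by_cases ha : a = a'
    · exact g.V hC (hJ t2) (by simp [e3]) i1 i2 ⟨by simp, by simp [ha]⟩
        ⟨by simp [e3', hu], by simp [e3', hu]⟩
    · obtain ⟨t, ht⟩ := other c.q3 t2
      exact g.V hC (hJ t) (by simp [e3]) i1 i2 ⟨by simp, by simp [ha, ht.symm]⟩
        ⟨by simp [e3', hu], by simp [e3', hu]⟩
  · subst e3
    have e2' : s2 ≠ z2 := fun h => e2 h.symm
    intro x2 a u hline x2' a' k' i
    by_contra hx
    have hx' : x2 ≠ x2' := fun h => hx h.symm
    by_cases hk : k = t3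
    · exact g.V hC (hJ t2) (by simp [e2]) (hline k') i ⟨by simp [e2', hx'], by simp [e2', hx']⟩
        ⟨by simp, by simp [hk]⟩
    · obtain ⟨t, ht⟩ := other c.r3 k'
      have hk' : t3 ≠ k := fun h => hk h.symm
      exact g.V hC (hJ t2) (by simp [e2]) (hline t) i ⟨by simp [e2', hx'], by simp [e2', hx']⟩
        ⟨by simp, by simp [hk', ht]⟩
  · exfalso
    have e2' : s2 ≠ z2 := fun h => e2 h.symm
    have e3' : s3 ≠ z3 := fun h => e3 h.symm
    rcases cross (fun z u => ∃ a k, InB B (z, a) (u, k)) (by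
      rintro z u z' u' ⟨a, k, i1⟩ ⟨a', k', i2⟩
      by_contra hcon
      push Not at hcon
      exact g.V hC (hJ t2) (by simp [e2]) i1 i2
        ⟨by simp [e2', hcon.1], by simp [e2', hcon.1]⟩
        ⟨by simp [e3', hcon.2], by simp [e3', hcon.2]⟩) with hh | hh
    · exact g.lemA' fun z2 a z2' a' u k k' i1 i2 => hh _ _ _ _ ⟨_, _, i1⟩ ⟨_, _, i2⟩
    · exact g.lemA fun z2 a a' u k u' k' i1 i2 => hh _ _ _ _ ⟨_, _, i1⟩ ⟨_, _, i2⟩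

theorem false (g : Al A B) : False := g.caseC g.getC3 g.swap.getC3

end Al

namespace Cfg

theorem main0 (c : Cfg A B) (lq : Fintype.card P < Fintype.card Q)
    (lr : Fintype.card P < Fintype.card R) : False := by
  by_cases h0 : Zr 0 2 2 B
  · by_cases h1 : Zr 1 2 2 B
    · exact c.case1 lq lr h0 h1
    · have a1 := (c.zr 1 2 2 (by omega) (by omega) (by omega) (by omega)).resolve_right h1
      exact (c.al lq lr a1 h0).false
  · have a0 := (c.zr 0 2 2 (by omega) (by omega) (by omega) (by omega)).resolve_right h0
    have b1 := (c.zr 1 2 2 (by omega) (by omega) (by omega) (by omega)).resolve_left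
      fun h => c.lemN h a0
    exact c.good_false (c.case3 lq lr a0 b1) a0

theorem main (c : Cfg A B) : False := by
  have h1 := c.pq
  have h2 := c.pr
  have h3 := c.qr
  by_cases e1 : Fintype.card P < Fintype.card Q <;> by_cases e2 : Fintype.card P < Fintype.card R
  · exact c.main0 e1 e2
  · exact c.rot3.main0 (by omega) (by omega)
  · exact c.swap12.main0 (by omega) (by omega)
  · by_cases e3 : Fintype.card Q < Fintype.card R
    · exact c.swap12.main0 (by omega) (by omega)
    · exact c.rot3.main0 (by omega) (by omega)

end Cfg
end TC

set_option linter.unusedSectionVars false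
set_option linter.unusedDecidableInType false
set_option linter.unusedFintypeInType false

namespace TC
open Polynomial

theorem fourier_inv {Y : Type} [Fintype Y] (n : ℕ) (hn : n ≠ 0) (ω : ℂ) (hω : IsPrimitiveRoot ω n)
    (u : Y → ℕ) (hu : ∀ y, u y < n) (hi : Function.Injective u) (f : Y → ℂ) (y' : Y) :
    f y' = ∑ a ∈ Finset.range n, ((n : ℂ)⁻¹ * ∑ y, f y * ((ω ^ a)⁻¹) ^ u y) * (ω ^ a) ^ u y' := by
  classical
  have hω0 : ω ≠ 0 := hω.ne_zero hn
  have key : ∀ y, ∑ a ∈ Finset.range n, ((ω ^ a)⁻¹) ^ u y * (ω ^ a) ^ u y' =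
      if y = y' then (n : ℂ) else 0 := by
    intro y
    split_ifs with h
    · subst h
      have : ∀ a ∈ Finset.range n, ((ω ^ a)⁻¹) ^ u y * (ω ^ a) ^ u y = 1 := by
        intro a _
        rw [← mul_pow, inv_mul_cancel₀ (pow_ne_zero _ hω0), one_pow]
      rw [Finset.sum_congr rfl this]
      simp
    · set z := (ω⁻¹) ^ u y * ω ^ u y' with hz
      have e : ∀ a ∈ Finset.range n, ((ω ^ a)⁻¹) ^ u y * (ω ^ a) ^ u y' = z ^ a := by
        intro a _
        rw [hz, mul_pow, ← inv_pow, ← pow_mul, ← pow_mul, ← pow_mul, ← pow_mul, mul_comm a,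
          mul_comm a]
      rw [Finset.sum_congr rfl e]
      have hz1 : z ≠ 1 := by
        intro h1
        have : ω ^ u y' = ω ^ u y := by
          rw [hz, inv_pow] at h1
          have h2 := pow_ne_zero (u y) hω0
          field_simp at h1
          exact h1
        exact h (hi (hω.pow_inj (hu _) (hu _) this)).symm
      have hzn : z ^ n = 1 := by
        rw [hz, mul_pow, ← pow_mul, ← pow_mul, mul_comm _ n, mul_comm _ n, pow_mul, pow_mul,
          inv_pow, hω.pow_eq_one]
        simp
      have := geom_sum_mul z n
      rw [hzn, sub_self] at this
      exact (mul_eq_zero.1 this).resolve_right (sub_ne_zero.2 hz1)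
  have : ∀ a ∈ Finset.range n, ((n : ℂ)⁻¹ * ∑ y, f y * ((ω ^ a)⁻¹) ^ u y) * (ω ^ a) ^ u y' =
      (n : ℂ)⁻¹ * ∑ y, f y * (((ω ^ a)⁻¹) ^ u y * (ω ^ a) ^ u y') := by
    intro a _
    rw [mul_assoc, Finset.sum_mul]
    congr 1
    exact Finset.sum_congr rfl fun y _ => by ring
  rw [Finset.sum_congr rfl this, ← Finset.mul_sum, Finset.sum_comm]
  simp only [← Finset.mul_sum, key]
  simp
  field_simp

/-- number represented by two digits -/
def dg {p : ℕ} (y : Fin p × Fin p) : ℕ := y.1.val + p * y.2.val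

theorem dg_lt {p : ℕ} (y : Fin p × Fin p) : dg y < p ^ 2 := by
  have h1 := y.1.2
  have h2 := y.2.2
  unfold dg
  nlinarith

theorem dg_dvd {p : ℕ} (y y' : Fin p × Fin p) : (p : ℤ) ∣ (dg y' : ℤ) - dg y ↔ y.1 = y'.1 := by
  unfold dg
  have : (((y'.1.val + p * y'.2.val : ℕ) : ℤ) - ((y.1.val + p * y.2.val : ℕ) : ℤ)) =
    ((y'.1.val : ℤ) - y.1.val) + p * ((y'.2.val : ℤ) - y.2.val) := by push_cast; ring
  rw [this, dvd_add_left (dvd_mul_right _ _)]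
  constructor
  · intro h
    have h1 := y.1.2
    have h2 := y'.1.2
    have := Int.eq_zero_of_abs_lt_dvd h (abs_lt.2 ⟨by omega, by omega⟩)
    exact Fin.ext (by omega)
  · intro h
    rw [h]
    simp

theorem dg_inj {p : ℕ} : Function.Injective (dg (p := p)) := by
  intro y y' h
  have h1 := (dg_dvd y y').1 (by rw [h]; simp)
  have hp : 0 < p := y.1.pos
  unfold dg at h
  rw [h1] at h
  have h2 : p * y.2.val = p * y'.2.val := by omega
  exact Prod.ext h1 (Fin.ext (Nat.eq_of_mul_eq_mul_left hp h2))

theorem dg_dvd2 {p : ℕ} (y y' : Fin p × Fin p) : ((p ^ 2 : ℕ) : ℤ) ∣ (dg y' : ℤ) - dg y ↔ y = y' := by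
  constructor
  · intro h
    have h1 := dg_lt y
    have h2 := dg_lt y'
    have := Int.eq_zero_of_abs_lt_dvd h (abs_lt.2 ⟨by omega, by omega⟩)
    exact dg_inj (by omega)
  · intro h
    rw [h]
    simp

theorem expand {p : ℕ} (hp : p.Prime) (s : ℕ) (hs : s ≤ 2) (φ : Fin p × Fin p → ℤ) (ht : Tst s φ) :
    ∃ (T : Finset ℕ) (w k : ℕ → ℂ), (∀ i ∈ T, orderOf (w i) = p ^ s) ∧
      ∀ y, (φ y : ℂ) = ∑ i ∈ T, k i * (w i) ^ dg y := by
  classical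
  have hn : p ^ 2 ≠ 0 := pow_ne_zero _ hp.ne_zero
  set ω := Complex.exp (2 * Real.pi * Complex.I / (p ^ 2 : ℕ)) with hωd
  have hω : IsPrimitiveRoot ω (p ^ 2) := Complex.isPrimitiveRoot_exp _ hn
  have hinv := fourier_inv (p ^ 2) hn ω hω dg dg_lt dg_inj (fun y => (φ y : ℂ))
  refine ⟨(Finset.range (p ^ 2)).filter (fun a => orderOf (ω ^ a) = p ^ s), fun a => ω ^ a,
    fun a => ((p ^ 2 : ℕ) : ℂ)⁻¹ * ∑ y, (φ y : ℂ) * ((ω ^ a)⁻¹) ^ dg y, ?_, ?_⟩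
  · intro i hi
    exact (Finset.mem_filter.1 hi).2
  · intro y'
    rw [hinv y', Finset.sum_filter_of_ne]
    intro a _ hne
    by_contra hord
    apply hne
    suffices h0 : ∑ y, (φ y : ℂ) * ((ω ^ a)⁻¹) ^ dg y = 0 by simp only [h0]; simp
    set z := (ω ^ a)⁻¹ with hz
    have hzo : orderOf z = orderOf (ω ^ a) := by
      rw [hz]
      have hne : ω ^ a ≠ 0 := pow_ne_zero _ (hω.ne_zero hn)
      apply Nat.dvd_antisymm
      · rw [orderOf_dvd_iff_pow_eq_one, inv_pow, pow_orderOf_eq_one, inv_one]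
      · rw [orderOf_dvd_iff_pow_eq_one]
        have := pow_orderOf_eq_one ((ω ^ a)⁻¹)
        rw [inv_pow, inv_eq_one] at this
        exact this
    have hzn : z ^ (p ^ 2) = 1 := by
      rw [hz, inv_pow, ← pow_mul, mul_comm, pow_mul, hω.pow_eq_one]
      simp
    rw [← hzo] at hord
    obtain ⟨m, hm2, hm⟩ := (Nat.dvd_prime_pow hp).1 (orderOf_dvd_of_pow_eq_one hzn)
    rw [hm] at hord
    have hms : m ≠ s := fun h => hord (by rw [h])
    rw [Fintype.sum_prod_type]
    have hdg : ∀ x h : Fin p, z ^ dg (x, h) = z ^ x.val * (z ^ p) ^ h.val := by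
      intro x h
      rw [dg, pow_add, pow_mul]
    have hgeo : m = 2 → ∑ h : Fin p, (z ^ p) ^ h.val = 0 := by
      intro h2
      rw [Fin.sum_univ_eq_sum_range (fun i => (z ^ p) ^ i)]
      have h1 : z ^ p ≠ 1 := by
        intro h1
        have := orderOf_dvd_of_pow_eq_one h1
        rw [hm, h2] at this
        have := Nat.le_of_dvd hp.pos this
        have := hp.two_le
        nlinarith
      have := geom_sum_mul (z ^ p) p
      rw [← pow_mul, ← sq, hzn, sub_self] at this
      exact (mul_eq_zero.1 this).resolve_right (sub_ne_zero.2 h1)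
    have hz1 : m ≤ 1 → z ^ p = 1 := by
      intro h1
      apply orderOf_dvd_iff_pow_eq_one.1
      rw [hm]
      exact (pow_dvd_pow p h1).trans (by simp)
    interval_cases s
    · -- constant
      have h0 : ∀ y, φ y = φ ((⟨0, hp.pos⟩, ⟨0, hp.pos⟩)) := fun y => ht _ _
      simp only [h0, hdg, ← Finset.mul_sum]
      rcases (show m = 1 ∨ m = 2 by omega) with h1 | h2
      · have hzp := hz1 (by omega)
        have : ∑ x : Fin p, z ^ x.val = 0 := by
          rw [Fin.sum_univ_eq_sum_range (fun i => z ^ i)]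
          have hz0 : z ≠ 1 := by
            intro h
            rw [h, orderOf_one, h1, pow_one] at hm
            exact hp.one_lt.ne hm
          have := geom_sum_mul z p
          rw [hzp, sub_self] at this
          exact (mul_eq_zero.1 this).resolve_right (sub_ne_zero.2 hz0)
        simp only [hzp, one_pow, ← Finset.sum_mul, this]
        simp
      · simp [hgeo h2]
    · obtain ⟨h1, h2⟩ := ht
      rcases (show m = 0 ∨ m = 2 by omega) with h3 | h3
      · have : z = 1 := by
          rw [h3, pow_zero, orderOf_eq_one_iff] at hm
          exact hm
        simp only [this, one_pow, mul_one]
        rw [← Fintype.sum_prod_type (f := fun y => (φ y : ℂ))]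
        exact_mod_cast h2
      · have h4 : ∀ x h, φ (x, h) = φ (x, ⟨0, hp.pos⟩) := fun x h => h1 _ _ _
        simp only [h4, hdg]
        simp only [← Finset.mul_sum, hgeo h3]
        simp
    · have hzp := hz1 (by omega)
      simp only [hdg, hzp, one_pow, mul_one]
      simp only [← Finset.sum_mul]
      apply Finset.sum_eq_zero
      intro x _
      have : (∑ h, (φ (x, h) : ℂ)) = 0 := by exact_mod_cast ht x
      rw [this, zero_mul]

theorem evalM {M : ℕ} [NeZero M] (A B : Finset (ZMod M)) (ht : IsTiling M (A : Set (ZMod M)) (B : Set (ZMod M))) {n : ℕ} (hn : n ∣ M)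
    (hn1 : n ≠ 1) :
    (∀ η : ℂ, orderOf η = n → ∑ a ∈ A, η ^ a.val = 0) ∨
    (∀ η : ℂ, orderOf η = n → ∑ a ∈ B, η ^ a.val = 0) := by
  have hM : M ≠ 0 := NeZero.ne M
  have hn0 : n ≠ 0 := fun h => hM (by rw [h] at hn; exact zero_dvd_iff.1 hn)
  have gen : ∀ (C : Finset (ZMod M)) (η η' : ℂ), IsPrimitiveRoot η n → orderOf η' = n →
      ∑ a ∈ C, η ^ a.val = 0 → ∑ a ∈ C, η' ^ a.val = 0 := by
    intro C η η' hη hη' h0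
    have h1 : aeval η (maskPoly M C) = 0 := by
      simp [maskPoly, h0]
    have h2 := minpoly.isIntegrallyClosed_dvd (hη.isIntegral (Nat.pos_of_ne_zero hn0)) h1
    rw [← cyclotomic_eq_minpoly hη (Nat.pos_of_ne_zero hn0)] at h2
    obtain ⟨q, hq⟩ := h2
    have hη'' : IsPrimitiveRoot η' n := hη' ▸ IsPrimitiveRoot.orderOf η'
    have h3 : aeval η' (cyclotomic n ℤ) = 0 := by
      rw [cyclotomic_eq_minpoly hη'' (Nat.pos_of_ne_zero hn0)]
      exact minpoly.aeval _ _
    have h4 : aeval η' (maskPoly M C) = 0 := by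
      rw [hq, map_mul, h3, zero_mul]
    simpa [maskPoly] using h4
  set η := Complex.exp (2 * Real.pi * Complex.I / n) with hηd
  have hη : IsPrimitiveRoot η n := Complex.isPrimitiveRoot_exp _ hn0
  have hηM : η ^ M = 1 := by
    obtain ⟨k, rfl⟩ := hn
    rw [pow_mul, hη.pow_eq_one, one_pow]
  have hval : ∀ a b : ZMod M, η ^ a.val * η ^ b.val = η ^ (a + b).val := by
    intro a b
    rw [← pow_add, ZMod.val_add, ← pow_mod_orderOf, ← pow_mod_orderOf (n := (a.val + b.val) % M)]
    congr 1
    exact (Nat.mod_mod_of_dvd _ (orderOf_dvd_of_pow_eq_one hηM)).symm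
  have hprod : (∑ a ∈ A, η ^ a.val) * (∑ b ∈ B, η ^ b.val) = 0 := by
    rw [Finset.sum_mul_sum, ← Finset.sum_product']
    have : ∑ x ∈ A ×ˢ B, η ^ x.1.val * η ^ x.2.val = ∑ g : ZMod M, η ^ g.val := by
      apply Finset.sum_bij (fun x _ => x.1 + x.2)
      · simp
      · rintro ⟨a, b⟩ h ⟨a', b'⟩ h' e
        rw [Finset.mem_product] at h h'
        obtain ⟨w, -, hw⟩ := ht (a + b)
        rw [hw (a, b) ⟨h.1, h.2, rfl⟩, hw (a', b') ⟨h'.1, h'.2, e.symm⟩]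
      · intro g _
        obtain ⟨w, ⟨h1, h2, h3⟩, -⟩ := ht g
        exact ⟨w, Finset.mem_product.2 ⟨h1, h2⟩, h3⟩
      · rintro ⟨a, b⟩ _
        exact hval a b
    rw [this]
    have e : ∑ g : ZMod M, η ^ g.val = ∑ i ∈ Finset.range M, η ^ i := by
      apply Finset.sum_bij (fun g _ => g.val)
      · intro g _
        exact Finset.mem_range.2 (ZMod.val_lt g)
      · intro g _ g' _ h
        exact ZMod.val_injective M h
      · intro i hi
        exact ⟨(i : ZMod M), Finset.mem_univ _, ZMod.val_cast_of_lt (Finset.mem_range.1 hi)⟩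
      · intro _ _
        rfl
    rw [e]
    have hη1 : η ≠ 1 := by
      intro h
      rw [h] at hη
      exact hn1 (hη.unique IsPrimitiveRoot.one)
    have := geom_sum_mul η M
    rw [hηM, sub_self] at this
    exact (mul_eq_zero.1 this).resolve_right (sub_ne_zero.2 hη1)
  rcases mul_eq_zero.1 hprod with h | h
  · exact Or.inl fun η' h' => gen A η η' hη h' h
  · exact Or.inr fun η' h' => gen B η η' hη h' h

/-- Sands: if `a - a' = t (b - b')` with `t` coprime to `M` then `a = a'` -/
theorem sands {M : ℕ} [NeZero M] (A B : Finset (ZMod M)) (ht : IsTiling M (A : Set (ZMod M)) (B : Set (ZMod M)))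
    (hc : A.card * B.card = M) (t : ℕ) (hco : t.Coprime M) {a a' b b' : ZMod M} (ha : a ∈ A)
    (ha' : a' ∈ A) (hb : b ∈ B) (hb' : b' ∈ B) (he : a - a' = t * (b - b')) : a = a' := by
  classical
  have hM : M ≠ 0 := NeZero.ne M
  set f : ZMod M → ℂ := fun g => ∑ x ∈ A ×ˢ B, if x.1 + t * x.2 = g then 1 else 0 with hf
  set ω := Complex.exp (2 * Real.pi * Complex.I / M) with hωd
  have hω : IsPrimitiveRoot ω M := Complex.isPrimitiveRoot_exp _ hM
  have hinv := fourier_inv M hM ω hω (fun g : ZMod M => g.val) (fun g => ZMod.val_lt g)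
    (ZMod.val_injective M) f
  have hhat : ∀ η : ℂ, η ^ M = 1 → η ≠ 1 → ∑ g, f g * η ^ g.val = 0 := by
    intro η h1 h2
    have hpm : ∀ k l : ℕ, k ≡ l [MOD M] → η ^ k = η ^ l := by
      intro k l h
      rw [← pow_mod_orderOf, ← pow_mod_orderOf (n := l)]
      congr 1
      exact h.of_dvd (orderOf_dvd_of_pow_eq_one h1)
    have e : ∑ g, f g * η ^ g.val = (∑ a ∈ A, η ^ a.val) * ∑ b ∈ B, (η ^ t) ^ b.val := by
      simp only [hf, Finset.sum_mul]
      rw [Finset.sum_comm, Finset.sum_product]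
      refine Finset.sum_congr rfl fun a _ => ?_
      rw [Finset.mul_sum]
      refine Finset.sum_congr rfl fun b _ => ?_
      simp only [ite_mul, one_mul, zero_mul]
      rw [Finset.sum_ite_eq]
      simp only [Finset.mem_univ, if_true]
      rw [← pow_mul, ← pow_add]
      apply hpm
      rw [← ZMod.natCast_eq_natCast_iff]
      simp
    rw [e]
    have hd : orderOf η ∣ M := orderOf_dvd_of_pow_eq_one h1
    have hot : orderOf (η ^ t) = orderOf η :=
      Nat.Coprime.orderOf_pow (Nat.Coprime.coprime_dvd_right hd hco).symm
    rcases evalM A B ht hd (by rwa [Ne, orderOf_eq_one_iff]) with h | h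
    · rw [h η rfl, zero_mul]
    · rw [h (η ^ t) hot, mul_zero]
  have hconst : ∀ g, f g = (M : ℂ)⁻¹ * ∑ g, f g := by
    intro g
    rw [hinv g, Finset.sum_eq_single 0]
    · simp
    · intro k hk hk0
      rw [hhat]
      · simp
      · rw [inv_pow, ← pow_mul, mul_comm, pow_mul, hω.pow_eq_one]
        simp
      · rw [Ne, inv_eq_one]
        intro h
        exact hk0 (Nat.eq_zero_of_dvd_of_lt ((hω.pow_eq_one_iff_dvd k).1 h) (Finset.mem_range.1 hk))
    · intro h
      exact absurd (Finset.mem_range.2 (Nat.pos_of_ne_zero hM)) h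
  have htot : ∑ g, f g = M := by
    simp only [hf]
    rw [Finset.sum_comm]
    simp only [Finset.sum_ite_eq, Finset.mem_univ, if_true]
    simp only [Finset.sum_const, Finset.card_product, hc]
    simp
  by_contra hne
  have h1 := hconst (a + t * b')
  rw [htot, inv_mul_cancel₀ (by exact_mod_cast hM)] at h1
  simp only [hf] at h1
  rw [Finset.sum_boole] at h1
  have h2 : (Finset.filter (fun x : ZMod M × ZMod M => x.1 + t * x.2 = a + t * b') (A ×ˢ B)).card = 1 := by
    exact_mod_cast h1
  obtain ⟨w, hw⟩ := Finset.card_eq_one.1 h2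
  have m1 : (a, b') ∈ Finset.filter (fun x : ZMod M × ZMod M => x.1 + t * x.2 = a + t * b') (A ×ˢ B) := by
    simp [ha, hb']
  have m2 : (a', b) ∈ Finset.filter (fun x : ZMod M × ZMod M => x.1 + t * x.2 = a + t * b') (A ×ˢ B) := by
    simp only [Finset.mem_filter, Finset.mem_product]
    refine ⟨⟨ha', hb⟩, ?_⟩
    linear_combination -he
  rw [hw, Finset.mem_singleton] at m1 m2
  exact hne (congrArg Prod.fst (m1.trans m2.symm))

end TC

set_option linter.unusedSectionVars false

namespace TC
open Polynomial

theorem zdvd {M D : ℕ} (hD : D ∣ M) (k : ℤ) : (D : ZMod M) ∣ (k : ZMod M) ↔ (D : ℤ) ∣ k := by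
  constructor
  · rintro ⟨c, hc⟩
    obtain ⟨c, rfl⟩ := ZMod.intCast_surjective c
    have h1 : ((k - D * c : ℤ) : ZMod M) = 0 := by
      push_cast
      rw [hc, sub_self]
    rw [ZMod.intCast_zmod_eq_zero_iff_dvd] at h1
    have h2 : (D : ℤ) ∣ k - D * c := (Int.natCast_dvd_natCast.2 hD).trans h1
    exact (dvd_sub_left (dvd_mul_right _ _)).1 h2
  · rintro ⟨c, rfl⟩
    push_cast
    exact dvd_mul_right _ _

theorem ppdvd {p q r : ℕ} (hpq : p.Coprime q) (hpr : p.Coprime r) {a : ℕ} (ha : a ≤ 2)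
    (d1 d2 d3 : ℤ) :
    ((p ^ a : ℕ) : ℤ) ∣ d1 * ((q ^ 2 * r ^ 2 : ℕ) : ℤ) + d2 * ((p ^ 2 * r ^ 2 : ℕ) : ℤ) +
      d3 * ((p ^ 2 * q ^ 2 : ℕ) : ℤ) ↔ ((p ^ a : ℕ) : ℤ) ∣ d1 := by
  have h2 : ((p ^ a : ℕ) : ℤ) ∣ d2 * ((p ^ 2 * r ^ 2 : ℕ) : ℤ) :=
    Dvd.dvd.mul_left (Int.natCast_dvd_natCast.2 ((pow_dvd_pow p ha).mul_right _)) _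
  have h3 : ((p ^ a : ℕ) : ℤ) ∣ d3 * ((p ^ 2 * q ^ 2 : ℕ) : ℤ) :=
    Dvd.dvd.mul_left (Int.natCast_dvd_natCast.2 ((pow_dvd_pow p ha).mul_right _)) _
  rw [dvd_add_left h3, dvd_add_left h2]
  constructor
  · intro h
    refine IsCoprime.dvd_of_dvd_mul_right ?_ h
    rw [Nat.isCoprime_iff_coprime]
    exact Nat.Coprime.mul_right (Nat.Coprime.pow _ _ hpq) (Nat.Coprime.pow _ _ hpr)
  · intro h
    exact h.mul_right _

theorem crtdvd {p q r : ℕ} (hpq : p.Coprime q) (hpr : p.Coprime r) (hqr : q.Coprime r) {a b c : ℕ}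
    (ha : a ≤ 2) (hb : b ≤ 2) (hc : c ≤ 2) (d1 d2 d3 : ℤ) :
    ((p ^ a * q ^ b * r ^ c : ℕ) : ℤ) ∣ d1 * ((q ^ 2 * r ^ 2 : ℕ) : ℤ) +
      d2 * ((p ^ 2 * r ^ 2 : ℕ) : ℤ) + d3 * ((p ^ 2 * q ^ 2 : ℕ) : ℤ) ↔
      ((p ^ a : ℕ) : ℤ) ∣ d1 ∧ ((q ^ b : ℕ) : ℤ) ∣ d2 ∧ ((r ^ c : ℕ) : ℤ) ∣ d3 := by
  rw [← ppdvd hpq hpr ha d1 d2 d3, ← ppdvd hpq.symm hqr hb d2 d1 d3,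
    ← ppdvd hpr.symm hqr.symm hc d3 d1 d2]
  have e2 : d2 * ((p ^ 2 * r ^ 2 : ℕ) : ℤ) + d1 * ((q ^ 2 * r ^ 2 : ℕ) : ℤ) +
      d3 * ((q ^ 2 * p ^ 2 : ℕ) : ℤ) = d1 * ((q ^ 2 * r ^ 2 : ℕ) : ℤ) +
      d2 * ((p ^ 2 * r ^ 2 : ℕ) : ℤ) + d3 * ((p ^ 2 * q ^ 2 : ℕ) : ℤ) := by push_cast; ring
  have e3 : d3 * ((p ^ 2 * q ^ 2 : ℕ) : ℤ) + d1 * ((r ^ 2 * q ^ 2 : ℕ) : ℤ) +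
      d2 * ((r ^ 2 * p ^ 2 : ℕ) : ℤ) = d1 * ((q ^ 2 * r ^ 2 : ℕ) : ℤ) +
      d2 * ((p ^ 2 * r ^ 2 : ℕ) : ℤ) + d3 * ((p ^ 2 * q ^ 2 : ℕ) : ℤ) := by push_cast; ring
  rw [e2, e3]
  generalize d1 * ((q ^ 2 * r ^ 2 : ℕ) : ℤ) +
      d2 * ((p ^ 2 * r ^ 2 : ℕ) : ℤ) + d3 * ((p ^ 2 * q ^ 2 : ℕ) : ℤ) = X
  constructor
  · intro h
    refine ⟨dvd_trans (Int.natCast_dvd_natCast.2 ?_) h, dvd_trans (Int.natCast_dvd_natCast.2 ?_) h,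
      dvd_trans (Int.natCast_dvd_natCast.2 ?_) h⟩
    · exact (dvd_mul_right _ _).mul_right _
    · exact (dvd_mul_left _ _).mul_right _
    · exact dvd_mul_left _ _
  · rintro ⟨h1, h2, h3⟩
    rw [Nat.cast_mul, Nat.cast_mul]
    refine IsCoprime.mul_dvd ?_ (IsCoprime.mul_dvd ?_ h1 h2) h3
    · rw [← Nat.cast_mul, Nat.isCoprime_iff_coprime]
      exact Nat.Coprime.mul_left (Nat.Coprime.pow _ _ hpr) (Nat.Coprime.pow _ _ hqr)
    · rw [Nat.isCoprime_iff_coprime]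
      exact Nat.Coprime.pow _ _ hpq

/-- the natural number with the given coordinates -/
def EN {p q r : ℕ} (y1 : Fin p × Fin p) (y2 : Fin q × Fin q) (y3 : Fin r × Fin r) : ℕ :=
  dg y1 * (q ^ 2 * r ^ 2) + dg y2 * (p ^ 2 * r ^ 2) + dg y3 * (p ^ 2 * q ^ 2)

theorem EN_dvd {p q r : ℕ} (hpq : p.Coprime q) (hpr : p.Coprime r) (hqr : q.Coprime r) {a b c : ℕ}
    (ha : a ≤ 2) (hb : b ≤ 2) (hc : c ≤ 2) (y1 y1' : Fin p × Fin p) (y2 y2' : Fin q × Fin q)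
    (y3 y3' : Fin r × Fin r) :
    ((p ^ a * q ^ b * r ^ c : ℕ) : ZMod (p ^ 2 * q ^ 2 * r ^ 2)) ∣
      (EN y1' y2' y3' : ZMod (p ^ 2 * q ^ 2 * r ^ 2)) - (EN y1 y2 y3 : ZMod (p ^ 2 * q ^ 2 * r ^ 2)) ↔
      ((p ^ a : ℕ) : ℤ) ∣ (dg y1' : ℤ) - dg y1 ∧ ((q ^ b : ℕ) : ℤ) ∣ (dg y2' : ℤ) - dg y2 ∧
      ((r ^ c : ℕ) : ℤ) ∣ (dg y3' : ℤ) - dg y3 := by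
  rw [← crtdvd hpq hpr hqr ha hb hc, ← zdvd (M := p ^ 2 * q ^ 2 * r ^ 2)]
  · apply iff_of_eq
    congr 1
    unfold EN
    push_cast
    ring
  · exact mul_dvd_mul (mul_dvd_mul (pow_dvd_pow _ ha) (pow_dvd_pow _ hb)) (pow_dvd_pow _ hc)

theorem EN_inj {p q r : ℕ} (hpq : p.Coprime q) (hpr : p.Coprime r) (hqr : q.Coprime r)
    {y1 y1' : Fin p × Fin p} {y2 y2' : Fin q × Fin q} {y3 y3' : Fin r × Fin r}
    (h : (EN y1 y2 y3 : ZMod (p ^ 2 * q ^ 2 * r ^ 2)) = EN y1' y2' y3') :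
    y1 = y1' ∧ y2 = y2' ∧ y3 = y3' := by
  have h1 := (EN_dvd hpq hpr hqr le_rfl le_rfl le_rfl y1 y1' y2 y2' y3 y3').1
    (by rw [h, sub_self]; exact dvd_zero _)
  rwa [dg_dvd2, dg_dvd2, dg_dvd2] at h1

theorem EN_bij {p q r : ℕ} (hp : p ≠ 0) (hq : q ≠ 0) (hr : r ≠ 0)
    (hpq : p.Coprime q) (hpr : p.Coprime r) (hqr : q.Coprime r) :
    Function.Bijective (fun y : (Fin p × Fin p) × (Fin q × Fin q) × (Fin r × Fin r) =>
      (EN y.1 y.2.1 y.2.2 : ZMod (p ^ 2 * q ^ 2 * r ^ 2))) := by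
  have : NeZero (p ^ 2 * q ^ 2 * r ^ 2) := ⟨by positivity⟩
  rw [Fintype.bijective_iff_injective_and_card]
  constructor
  · rintro ⟨y1, y2, y3⟩ ⟨z1, z2, z3⟩ h
    obtain ⟨h1, h2, h3⟩ := EN_inj hpq hpr hqr h
    simp only at h1 h2 h3
    rw [h1, h2, h3]
  · simp only [Fintype.card_prod, Fintype.card_fin, ZMod.card]
    ring

/-- nested sum over coordinates -/
theorem sum_EN {p q r : ℕ} (hp : p ≠ 0) (hq : q ≠ 0) (hr : r ≠ 0)
    (hpq : p.Coprime q) (hpr : p.Coprime r) (hqr : q.Coprime r)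
    (C : Finset (ZMod (p ^ 2 * q ^ 2 * r ^ 2))) {S : Type} [CommRing S]
    (g : (Fin p × Fin p) → (Fin q × Fin q) → (Fin r × Fin r) → S)
    (f : ZMod (p ^ 2 * q ^ 2 * r ^ 2) → S)
    (hf : ∀ y1 y2 y3, g y1 y2 y3 = f (EN y1 y2 y3)) :
    ∑ y1, ∑ y2, ∑ y3, g y1 y2 y3 * (if (EN y1 y2 y3 : ZMod (p ^ 2 * q ^ 2 * r ^ 2)) ∈ C then 1 else 0)
      = ∑ a ∈ C, f a := by
  classical
  have : NeZero (p ^ 2 * q ^ 2 * r ^ 2) := ⟨by positivity⟩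
  have e : ∑ a ∈ C, f a = ∑ a, f a * (if a ∈ C then 1 else 0) := by
    simp
  rw [e, ← (EN_bij hp hq hr hpq hpr hqr).sum_comp (fun a => f a * (if a ∈ C then 1 else 0))]
  conv_rhs => rw [Fintype.sum_prod_type]
  refine Finset.sum_congr rfl fun y1 _ => ?_
  conv_rhs => rw [Fintype.sum_prod_type]
  refine Finset.sum_congr rfl fun y2 _ => ?_
  refine Finset.sum_congr rfl fun y3 _ => ?_
  rw [hf]

theorem exroot {n s p N : ℕ} (hn : n = p ^ s) (ω : ℂ) (ho : orderOf ω = n) (hN : N.Coprime p) :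
    ∃ η : ℂ, η ^ N = ω ∧ orderOf η = n := by
  obtain ⟨m, hm⟩ := exists_pow_eq_self_of_coprime (x := ω) (n := N)
    (by rw [ho, hn]; exact hN.pow_right s)
  have e : (ω ^ m) ^ N = ω := by rw [← pow_mul, mul_comm, pow_mul, hm]
  refine ⟨ω ^ m, e, ?_⟩
  apply Nat.dvd_antisymm
  · rw [← ho]
    exact orderOf_pow_dvd m
  · rw [← ho]
    conv_lhs => rw [← e]
    exact orderOf_pow_dvd N

theorem sum_char {p q r : ℕ} (hp : p ≠ 0) (hq : q ≠ 0) (hr : r ≠ 0)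
    (hpq : p.Coprime q) (hpr : p.Coprime r) (hqr : q.Coprime r)
    (C : Finset (ZMod (p ^ 2 * q ^ 2 * r ^ 2))) {s1 s2 s3 : ℕ} (h1 : s1 ≤ 2) (h2 : s2 ≤ 2)
    (h3 : s3 ≤ 2)
    (hC : ∀ η : ℂ, orderOf η = p ^ s1 * q ^ s2 * r ^ s3 → ∑ a ∈ C, η ^ a.val = 0)
    (w1 w2 w3 : ℂ) (o1 : orderOf w1 = p ^ s1) (o2 : orderOf w2 = q ^ s2) (o3 : orderOf w3 = r ^ s3) :
    ∑ y1 : Fin p × Fin p, ∑ y2 : Fin q × Fin q, ∑ y3 : Fin r × Fin r,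
      (w1 ^ dg y1 * w2 ^ dg y2 * w3 ^ dg y3) *
      (if (EN y1 y2 y3 : ZMod (p ^ 2 * q ^ 2 * r ^ 2)) ∈ C then 1 else 0) = 0 := by
  have : NeZero (p ^ 2 * q ^ 2 * r ^ 2) := ⟨by positivity⟩
  obtain ⟨v1, e1, f1⟩ := exroot (N := q ^ 2 * r ^ 2) rfl w1 o1
    (Nat.Coprime.mul_left (hpq.symm.pow_left _) (hpr.symm.pow_left _))
  obtain ⟨v2, e2, f2⟩ := exroot (N := p ^ 2 * r ^ 2) rfl w2 o2
    (Nat.Coprime.mul_left (hpq.pow_left _) (hqr.symm.pow_left _))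
  obtain ⟨v3, e3, f3⟩ := exroot (N := p ^ 2 * q ^ 2) rfl w3 o3
    (Nat.Coprime.mul_left (hpr.pow_left _) (hqr.pow_left _))
  have g1 : v1 ^ p ^ 2 = 1 := orderOf_dvd_iff_pow_eq_one.1 (by rw [f1]; exact pow_dvd_pow _ h1)
  have g2 : v2 ^ q ^ 2 = 1 := orderOf_dvd_iff_pow_eq_one.1 (by rw [f2]; exact pow_dvd_pow _ h2)
  have g3 : v3 ^ r ^ 2 = 1 := orderOf_dvd_iff_pow_eq_one.1 (by rw [f3]; exact pow_dvd_pow _ h3)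
  have k1 : ∀ n, v1 ^ (p ^ 2 * n) = 1 := fun n => by rw [pow_mul, g1, one_pow]
  have k2 : ∀ n, v2 ^ (q ^ 2 * n) = 1 := fun n => by rw [pow_mul, g2, one_pow]
  have k3 : ∀ n, v3 ^ (r ^ 2 * n) = 1 := fun n => by rw [pow_mul, g3, one_pow]
  have o12 : orderOf (v1 * v2) = p ^ s1 * q ^ s2 := by
    rw [(Commute.all v1 v2).orderOf_mul_eq_mul_orderOf_of_coprime, f1, f2]
    rw [f1, f2]
    exact Nat.Coprime.pow _ _ hpq
  have o123 : orderOf (v1 * v2 * v3) = p ^ s1 * q ^ s2 * r ^ s3 := by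
    rw [(Commute.all (v1 * v2) v3).orderOf_mul_eq_mul_orderOf_of_coprime, o12, f3]
    rw [o12, f3]
    exact Nat.Coprime.mul_left (Nat.Coprime.pow _ _ hpr) (Nat.Coprime.pow _ _ hqr)
  set η := v1 * v2 * v3 with hη
  have hηM : η ^ (p ^ 2 * q ^ 2 * r ^ 2) = 1 := by
    rw [← orderOf_dvd_iff_pow_eq_one, o123]
    exact mul_dvd_mul (mul_dvd_mul (pow_dvd_pow _ h1) (pow_dvd_pow _ h2)) (pow_dvd_pow _ h3)
  refine Eq.trans ?_ (hC η o123)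
  refine sum_EN hp hq hr hpq hpr hqr C (fun (y1 : Fin p × Fin p) (y2 : Fin q × Fin q)
    (y3 : Fin r × Fin r) => w1 ^ dg y1 * w2 ^ dg y2 * w3 ^ dg y3) (fun a => η ^ a.val) ?_
  intro y1 y2 y3
  have hv : η ^ ((EN y1 y2 y3 : ZMod (p ^ 2 * q ^ 2 * r ^ 2))).val = η ^ EN y1 y2 y3 := by
    rw [ZMod.val_natCast]
    conv_rhs => rw [← Nat.div_add_mod (EN y1 y2 y3) (p ^ 2 * q ^ 2 * r ^ 2)]
    rw [pow_add, pow_mul, hηM, one_pow, one_mul]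
  simp only [hv]
  have n1 : η ^ (q ^ 2 * r ^ 2) = w1 := by
    rw [hη, mul_pow, mul_pow, e1, k2, mul_comm (q ^ 2), k3, mul_one, mul_one]
  have n2 : η ^ (p ^ 2 * r ^ 2) = w2 := by
    rw [hη, mul_pow, mul_pow, e2, k1, mul_comm (p ^ 2), k3, one_mul, mul_one]
  have n3 : η ^ (p ^ 2 * q ^ 2) = w3 := by
    rw [hη, mul_pow, mul_pow, e3, k1, mul_comm (p ^ 2), k2, one_mul, one_mul]
  unfold EN
  rw [pow_add, pow_add, mul_comm (dg y1), mul_comm (dg y2), mul_comm (dg y3),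
    pow_mul η (q ^ 2 * r ^ 2), pow_mul η (p ^ 2 * r ^ 2), pow_mul η (p ^ 2 * q ^ 2), n1, n2, n3]

theorem zr_of {p q r : ℕ} (hp : p.Prime) (hq : q.Prime) (hr : r.Prime)
    (hpq : p.Coprime q) (hpr : p.Coprime r) (hqr : q.Coprime r)
    (C : Finset (ZMod (p ^ 2 * q ^ 2 * r ^ 2))) {s1 s2 s3 : ℕ} (h1 : s1 ≤ 2) (h2 : s2 ≤ 2)
    (h3 : s3 ≤ 2)
    (hC : ∀ η : ℂ, orderOf η = p ^ s1 * q ^ s2 * r ^ s3 → ∑ a ∈ C, η ^ a.val = 0) :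
    Zr s1 s2 s3 (fun (y1 : Fin p × Fin p) (y2 : Fin q × Fin q) (y3 : Fin r × Fin r) =>
      (if (EN y1 y2 y3 : ZMod (p ^ 2 * q ^ 2 * r ^ 2)) ∈ C then (1 : ℤ) else 0)) := by
  intro φ1 φ2 φ3 t1 t2 t3
  obtain ⟨T1, w1, k1, o1, e1⟩ := expand hp s1 h1 φ1 t1
  obtain ⟨T2, w2, k2, o2, e2⟩ := expand hq s2 h2 φ2 t2
  obtain ⟨T3, w3, k3, o3, e3⟩ := expand hr s3 h3 φ3 t3
  have key : ∀ i ∈ T1, ∀ j ∈ T2, ∀ l ∈ T3, _ := fun i hi j hj l hl =>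
    sum_char hp.ne_zero hq.ne_zero hr.ne_zero hpq hpr hqr C h1 h2 h3 hC (w1 i) (w2 j) (w3 l)
      (o1 i hi) (o2 j hj) (o3 l hl)
  have hz : (∑ i ∈ T1, ∑ j ∈ T2, ∑ l ∈ T3, k1 i * k2 j * k3 l *
      ∑ y1 : Fin p × Fin p, ∑ y2 : Fin q × Fin q, ∑ y3 : Fin r × Fin r,
      (w1 i ^ dg y1 * w2 j ^ dg y2 * w3 l ^ dg y3) *
      (if (EN y1 y2 y3 : ZMod (p ^ 2 * q ^ 2 * r ^ 2)) ∈ C then (1 : ℂ) else 0)) = 0 := by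
    refine Finset.sum_eq_zero fun i hi => Finset.sum_eq_zero fun j hj =>
      Finset.sum_eq_zero fun l hl => ?_
    rw [key i hi j hj l hl, mul_zero]
  have goal : ((∑ y1, φ1 y1 * ∑ y2, φ2 y2 * ∑ y3, φ3 y3 *
      (if (EN y1 y2 y3 : ZMod (p ^ 2 * q ^ 2 * r ^ 2)) ∈ C then (1 : ℤ) else 0) : ℤ) : ℂ) = 0 := by
    rw [← hz]
    push_cast
    simp only [e1, e2, e3]
    simp only [Finset.sum_mul, Finset.mul_sum]
    -- bring the sums over the coordinates outside
    have c : ∀ F : (Fin p × Fin p) → (Fin q × Fin q) → (Fin r × Fin r) → ℕ → ℕ → ℕ → ℂ,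
        ∑ i ∈ T1, ∑ j ∈ T2, ∑ l ∈ T3, ∑ y1, ∑ y2, ∑ y3, F y1 y2 y3 i j l =
        ∑ y1, ∑ y2, ∑ y3, ∑ i ∈ T1, ∑ j ∈ T2, ∑ l ∈ T3, F y1 y2 y3 i j l := by
      intro F
      have a1 : ∀ i j, ∑ l ∈ T3, ∑ y1, ∑ y2, ∑ y3, F y1 y2 y3 i j l =
          ∑ y1, ∑ y2, ∑ y3, ∑ l ∈ T3, F y1 y2 y3 i j l := by
        intro i j
        rw [Finset.sum_comm]
        refine Finset.sum_congr rfl fun y1 _ => ?_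
        rw [Finset.sum_comm]
        refine Finset.sum_congr rfl fun y2 _ => ?_
        rw [Finset.sum_comm]
      have a2 : ∀ i, ∑ j ∈ T2, ∑ y1, ∑ y2, ∑ y3, ∑ l ∈ T3, F y1 y2 y3 i j l =
          ∑ y1, ∑ y2, ∑ y3, ∑ j ∈ T2, ∑ l ∈ T3, F y1 y2 y3 i j l := by
        intro i
        rw [Finset.sum_comm]
        refine Finset.sum_congr rfl fun y1 _ => ?_
        rw [Finset.sum_comm]
        refine Finset.sum_congr rfl fun y2 _ => ?_
        rw [Finset.sum_comm]
      simp only [a1, a2]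
      rw [Finset.sum_comm]
      refine Finset.sum_congr rfl fun y1 _ => ?_
      rw [Finset.sum_comm]
      refine Finset.sum_congr rfl fun y2 _ => ?_
      rw [Finset.sum_comm]
    rw [c]
    refine Finset.sum_congr rfl fun y1 _ => ?_
    refine Finset.sum_congr rfl fun y2 _ => Finset.sum_congr rfl fun y3 _ => ?_
    have b : ∀ G : ℕ → ℕ → ℕ → ℂ, ∑ l ∈ T3, ∑ j ∈ T2, ∑ i ∈ T1, G i j l =
        ∑ i ∈ T1, ∑ j ∈ T2, ∑ l ∈ T3, G i j l := by
      intro G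
      rw [Finset.sum_comm]
      have : ∀ j, ∑ l ∈ T3, ∑ i ∈ T1, G i j l = ∑ i ∈ T1, ∑ l ∈ T3, G i j l :=
        fun j => Finset.sum_comm
      simp only [this]
      rw [Finset.sum_comm]
    rw [b (fun i j l => k1 i * w1 i ^ dg y1 * (k2 j * w2 j ^ dg y2 * (k3 l * w3 l ^ dg y3 *
      if (EN y1 y2 y3 : ZMod (p ^ 2 * q ^ 2 * r ^ 2)) ∈ C then (1 : ℂ) else 0)))]
    refine Finset.sum_congr rfl fun i _ =>
      Finset.sum_congr rfl fun j _ =>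
      Finset.sum_congr rfl fun l _ => ?_
    ring
  exact_mod_cast goal

end TC

set_option linter.unusedSectionVars false

namespace TC
open Polynomial

theorem unit_t {p : ℕ} (hp : p.Prime) (k : ℕ) (hk : k ≠ 0) (d e : ℤ) (hd : ¬ (p : ℤ) ∣ d)
    (he : ¬ (p : ℤ) ∣ e) : ∃ t : ℕ, ¬ p ∣ t ∧ (p : ℤ) ^ k ∣ t * e - d := by
  have hp' : Prime (p : ℤ) := Nat.prime_iff_prime_int.1 hp
  have hc : IsCoprime e ((p : ℤ) ^ k) :=
    ((Irreducible.coprime_iff_not_dvd hp'.irreducible).2 he).symm.pow_right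
  obtain ⟨u, v, huv⟩ := hc
  have hpk : (0 : ℤ) < (p : ℤ) ^ k := pow_pos (by exact_mod_cast hp.pos) k
  obtain ⟨t, ht⟩ := Int.eq_ofNat_of_zero_le (Int.emod_nonneg (d * u) hpk.ne')
  have h1 : (p : ℤ) ^ k ∣ t * e - d := by
    have h2 : (p : ℤ) ^ k ∣ d * u - t := by
      have := Int.dvd_self_sub_of_emod_eq ht
      exact this
    have h3 : (t : ℤ) * e - d = -(d * u - t) * e - d * v * (p : ℤ) ^ k := by
      linear_combination d * huv
    rw [h3]
    exact dvd_sub ((h2.neg_right).mul_right _) (dvd_mul_left _ _)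
  refine ⟨t, ?_, h1⟩
  intro h
  apply hd
  have h4 : (p : ℤ) ∣ t * e := (Int.natCast_dvd_natCast.2 h).mul_right _
  have h5 : (p : ℤ) ∣ t * e - d := (dvd_pow_self _ hk).trans h1
  exact (dvd_sub_right h4).1 h5

theorem coord_t {p : ℕ} (hp : p.Prime) (d e : ℤ) (h1 : (p : ℤ) ∣ d ↔ (p : ℤ) ∣ e)
    (h2 : ((p ^ 2 : ℕ) : ℤ) ∣ d ↔ ((p ^ 2 : ℕ) : ℤ) ∣ e) :
    ∃ t : ℕ, ¬ p ∣ t ∧ ((p ^ 2 : ℕ) : ℤ) ∣ t * e - d := by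
  push_cast at *
  have hp0 : (p : ℤ) ≠ 0 := by exact_mod_cast hp.ne_zero
  by_cases hd2 : (p : ℤ) ^ 2 ∣ d
  · refine ⟨1, fun h => hp.one_lt.ne' (Nat.dvd_one.1 h), ?_⟩
    push_cast
    exact dvd_sub ((h2.1 hd2).mul_left _) hd2
  by_cases hd : (p : ℤ) ∣ d
  · have he2 : ¬ (p : ℤ) ^ 2 ∣ e := fun h => hd2 (h2.2 h)
    obtain ⟨e', rfl⟩ := h1.1 hd
    obtain ⟨d', rfl⟩ := hd
    rw [sq, mul_dvd_mul_iff_left hp0] at hd2 he2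
    obtain ⟨t, ht, h⟩ := unit_t hp 1 one_ne_zero d' e' hd2 he2
    refine ⟨t, ht, ?_⟩
    rw [pow_one] at h
    have : (t : ℤ) * (p * e') - p * d' = p * (t * e' - d') := by ring
    rw [this, sq]
    exact mul_dvd_mul_left _ h
  · obtain ⟨t, ht, h⟩ := unit_t hp 2 two_ne_zero d e hd (fun h => hd (h1.2 h))
    exact ⟨t, ht, h⟩

theorem rel_t {p : ℕ} (hp : p.Prime) (y y' z z' : Fin p × Fin p) (h : Rel y y' z z') :
    ∃ t : ℕ, ¬ p ∣ t ∧ ((p ^ 2 : ℕ) : ℤ) ∣ t * ((dg z : ℤ) - dg z') - ((dg y : ℤ) - dg y') := by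
  apply coord_t hp
  · rw [dg_dvd, dg_dvd, eq_comm, h.1, eq_comm]
  · rw [dg_dvd2, dg_dvd2, eq_comm, h.2, eq_comm]

theorem dv_of {p q r : ℕ} (hp : p.Prime) (hq : q.Prime) (hr : r.Prime)
    (hpq : p.Coprime q) (hpr : p.Coprime r) (hqr : q.Coprime r)
    (A B : Finset (ZMod (p ^ 2 * q ^ 2 * r ^ 2)))
    (ht : IsTiling _ (A : Set (ZMod (p ^ 2 * q ^ 2 * r ^ 2))) (B : Set (ZMod (p ^ 2 * q ^ 2 * r ^ 2))))
    (hc : A.card * B.card = p ^ 2 * q ^ 2 * r ^ 2)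
    (y1 y1' z1 z1' : Fin p × Fin p) (y2 y2' z2 z2' : Fin q × Fin q) (y3 y3' z3 z3' : Fin r × Fin r)
    (hy : (EN y1 y2 y3 : ZMod (p ^ 2 * q ^ 2 * r ^ 2)) ∈ A)
    (hy' : (EN y1' y2' y3' : ZMod (p ^ 2 * q ^ 2 * r ^ 2)) ∈ A)
    (hz : (EN z1 z2 z3 : ZMod (p ^ 2 * q ^ 2 * r ^ 2)) ∈ B)
    (hz' : (EN z1' z2' z3' : ZMod (p ^ 2 * q ^ 2 * r ^ 2)) ∈ B)
    (r1 : Rel y1 y1' z1 z1') (r2 : Rel y2 y2' z2 z2') (r3 : Rel y3 y3' z3 z3') :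
    y1 = y1' ∧ y2 = y2' ∧ y3 = y3' := by
  have hp0 := hp.ne_zero
  have hq0 := hq.ne_zero
  have hr0 := hr.ne_zero
  have : NeZero (p ^ 2 * q ^ 2 * r ^ 2) := ⟨by positivity⟩
  obtain ⟨t1, n1, d1⟩ := rel_t hp _ _ _ _ r1
  obtain ⟨t2, n2, d2⟩ := rel_t hq _ _ _ _ r2
  obtain ⟨t3, n3, d3⟩ := rel_t hr _ _ _ _ r3
  obtain ⟨t12, m1, m2⟩ := Nat.chineseRemainder (Nat.Coprime.pow 2 2 hpq) t1 t2
  obtain ⟨t, m12, m3⟩ := Nat.chineseRemainder (n := p ^ 2 * q ^ 2) (m := r ^ 2)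
    (Nat.Coprime.mul_left (Nat.Coprime.pow 2 2 hpr) (Nat.Coprime.pow 2 2 hqr)) t12 t3
  have l1 : t ≡ t1 [MOD p ^ 2] := (m12.of_dvd (dvd_mul_right _ _)).trans m1
  have l2 : t ≡ t2 [MOD q ^ 2] := (m12.of_dvd (dvd_mul_left _ _)).trans m2
  have cop : ∀ {u s s' : ℕ}, u.Prime → ¬ u ∣ s' → s ≡ s' [MOD u ^ 2] → s.Coprime (u ^ 2) := by
    intro u s s' hu h1 h2
    apply Nat.Coprime.pow_right
    apply Nat.Coprime.symm
    rw [hu.coprime_iff_not_dvd]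
    intro h3
    exact h1 (((h2.of_dvd (dvd_pow_self u two_ne_zero)).dvd_iff dvd_rfl).1 h3)
  have hco : t.Coprime (p ^ 2 * q ^ 2 * r ^ 2) :=
    Nat.Coprime.mul_right (Nat.Coprime.mul_right (cop hp n1 l1) (cop hq n2 l2)) (cop hr n3 m3)
  have tr : ∀ {u s s' : ℕ} {e d : ℤ}, s ≡ s' [MOD u ^ 2] → ((u ^ 2 : ℕ) : ℤ) ∣ s' * e - d →
      ((u ^ 2 : ℕ) : ℤ) ∣ d - s * e := by
    intro u s s' e d h1 h2
    have h3 := (Nat.modEq_iff_dvd).1 h1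
    have : d - s * e = (s' - s) * e - (s' * e - d) := by ring
    rw [this]
    exact dvd_sub (h3.mul_right _) h2
  have big := (crtdvd hpq hpr hqr le_rfl le_rfl le_rfl _ _ _).2 ⟨tr l1 d1, tr l2 d2, tr m3 d3⟩
  rw [← ZMod.intCast_zmod_eq_zero_iff_dvd] at big
  refine EN_inj hpq hpr hqr (sands A B ht hc t hco hy hy' hz hz' ?_)
  rw [← sub_eq_zero, ← big]
  unfold EN
  push_cast
  ring

end TC

set_option linter.unusedSectionVars false

namespace TC
open Polynomial

section grids
variable {p q r : ℕ} (hp : p.Prime) (hq : q.Prime) (hr : r.Prime)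
    (hpq : p.Coprime q) (hpr : p.Coprime r) (hqr : q.Coprime r)

theorem gridD (hpq : p.Coprime q) (hpr : p.Coprime r) (hqr : q.Coprime r)
    (y1 y1' : Fin p × Fin p) (y2 y2' : Fin q × Fin q) (y3 y3' : Fin r × Fin r) :
    (EN y1' y2' y3' : ZMod (p ^ 2 * q ^ 2 * r ^ 2)) ∈
      gridSet (p ^ 2 * q ^ 2 * r ^ 2) (EN y1 y2 y3 : ZMod (p ^ 2 * q ^ 2 * r ^ 2)) (p * q * r) ↔
      y1.1 = y1'.1 ∧ y2.1 = y2'.1 ∧ y3.1 = y3'.1 := by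
  have h := EN_dvd hpq hpr hqr (a := 1) (b := 1) (c := 1) (by norm_num) (by norm_num) (by norm_num)
    y1 y1' y2 y2' y3 y3'
  simp only [pow_one] at h
  rw [dg_dvd, dg_dvd, dg_dvd] at h
  exact h

theorem grid1 (hp : p ≠ 0) (hpq : p.Coprime q) (hpr : p.Coprime r) (hqr : q.Coprime r)
    (y1 y1' : Fin p × Fin p) (y2 y2' : Fin q × Fin q) (y3 y3' : Fin r × Fin r) :
    (EN y1' y2' y3' : ZMod (p ^ 2 * q ^ 2 * r ^ 2)) ∈
      gridSet (p ^ 2 * q ^ 2 * r ^ 2) (EN y1 y2 y3 : ZMod (p ^ 2 * q ^ 2 * r ^ 2))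
        (p ^ 2 * q ^ 2 * r ^ 2 / p) ↔ y1.1 = y1'.1 ∧ y2 = y2' ∧ y3 = y3' := by
  have e : p ^ 2 * q ^ 2 * r ^ 2 / p = p ^ 1 * q ^ 2 * r ^ 2 :=
    Nat.div_eq_of_eq_mul_left (Nat.pos_of_ne_zero hp) (by ring)
  have h := EN_dvd hpq hpr hqr (a := 1) (b := 2) (c := 2) (by norm_num) (by norm_num) (by norm_num)
    y1 y1' y2 y2' y3 y3'
  rw [dg_dvd2, dg_dvd2, ← e, pow_one, dg_dvd] at h
  exact h

theorem grid2 (hq : q ≠ 0) (hpq : p.Coprime q) (hpr : p.Coprime r) (hqr : q.Coprime r)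
    (y1 y1' : Fin p × Fin p) (y2 y2' : Fin q × Fin q) (y3 y3' : Fin r × Fin r) :
    (EN y1' y2' y3' : ZMod (p ^ 2 * q ^ 2 * r ^ 2)) ∈
      gridSet (p ^ 2 * q ^ 2 * r ^ 2) (EN y1 y2 y3 : ZMod (p ^ 2 * q ^ 2 * r ^ 2))
        (p ^ 2 * q ^ 2 * r ^ 2 / q) ↔ y1 = y1' ∧ y2.1 = y2'.1 ∧ y3 = y3' := by
  have e : p ^ 2 * q ^ 2 * r ^ 2 / q = p ^ 2 * q ^ 1 * r ^ 2 :=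
    Nat.div_eq_of_eq_mul_left (Nat.pos_of_ne_zero hq) (by ring)
  have h := EN_dvd hpq hpr hqr (a := 2) (b := 1) (c := 2) (by norm_num) (by norm_num) (by norm_num)
    y1 y1' y2 y2' y3 y3'
  rw [dg_dvd2, dg_dvd2, ← e, pow_one, dg_dvd] at h
  exact h

theorem grid3 (hr : r ≠ 0) (hpq : p.Coprime q) (hpr : p.Coprime r) (hqr : q.Coprime r)
    (y1 y1' : Fin p × Fin p) (y2 y2' : Fin q × Fin q) (y3 y3' : Fin r × Fin r) :
    (EN y1' y2' y3' : ZMod (p ^ 2 * q ^ 2 * r ^ 2)) ∈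
      gridSet (p ^ 2 * q ^ 2 * r ^ 2) (EN y1 y2 y3 : ZMod (p ^ 2 * q ^ 2 * r ^ 2))
        (p ^ 2 * q ^ 2 * r ^ 2 / r) ↔ y1 = y1' ∧ y2 = y2' ∧ y3.1 = y3'.1 := by
  have e : p ^ 2 * q ^ 2 * r ^ 2 / r = p ^ 2 * q ^ 2 * r ^ 1 :=
    Nat.div_eq_of_eq_mul_left (Nat.pos_of_ne_zero hr) (by ring)
  have h := EN_dvd hpq hpr hqr (a := 2) (b := 2) (c := 1) (by norm_num) (by norm_num) (by norm_num)
    y1 y1' y2 y2' y3 y3'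
  rw [dg_dvd2, dg_dvd2, ← e, pow_one, dg_dvd] at h
  exact h

end grids

end TC

/-- **Case (F1).** If `A` is fibered on `D(M)`-grids and the sets `I, J, K` of
elements of `A` lying on full `M`-fibers in the three directions are pairwise disjoint, then
at least one of them is empty. -/
theorem statement19
    (pi pj pk : ℕ) (hpi : pi.Prime) (hpj : pj.Prime) (hpk : pk.Prime)
    (hoi : Odd pi) (hoj : Odd pj) (hok : Odd pk)
    (hij : pi ≠ pj) (hik : pi ≠ pk) (hjk : pj ≠ pk)
    (M : ℕ) (hM : M = pi ^ 2 * pj ^ 2 * pk ^ 2)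
    (A B : Finset (ZMod M))
    (htile : IsTiling M (A : Set (ZMod M)) (B : Set (ZMod M)))
    (hcardA : A.card = pi * pj * pk) (hcardB : B.card = pi * pj * pk)
    (hPhiM : cycDvd M M A)
    (hfib : ∀ a ∈ A,
      Fibered M pi ((A : Set (ZMod M)) ∩ gridSet M a (pi * pj * pk)) ∨
      Fibered M pj ((A : Set (ZMod M)) ∩ gridSet M a (pi * pj * pk)) ∨
      Fibered M pk ((A : Set (ZMod M)) ∩ gridSet M a (pi * pj * pk)))
    (I J K : Set (ZMod M))
    (hI : I = {a : ZMod M | a ∈ A ∧ gridSet M a (M / pi) ⊆ (A : Set (ZMod M))})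
    (hJ : J = {a : ZMod M | a ∈ A ∧ gridSet M a (M / pj) ⊆ (A : Set (ZMod M))})
    (hK : K = {a : ZMod M | a ∈ A ∧ gridSet M a (M / pk) ⊆ (A : Set (ZMod M))})
    (hIJ : Disjoint I J) (hIK : Disjoint I K) (hJK : Disjoint J K) :
    I = ∅ ∨ J = ∅ ∨ K = ∅ := by
  classical
  subst hM
  by_contra hne
  rw [not_or, not_or] at hne
  obtain ⟨neI, neJ, neK⟩ := hne
  rw [← Ne, ← Set.nonempty_iff_ne_empty] at neI neJ neK
  have hpq : pi.Coprime pj := (Nat.coprime_primes hpi hpj).2 hij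
  have hpr : pi.Coprime pk := (Nat.coprime_primes hpi hpk).2 hik
  have hqr : pj.Coprime pk := (Nat.coprime_primes hpj hpk).2 hjk
  have three : ∀ {n : ℕ}, n.Prime → Odd n → 3 ≤ n := by
    intro n h1 h2
    have := h1.two_le
    rcases h2 with ⟨k, rfl⟩
    omega
  have hp0 := hpi.ne_zero
  have hq0 := hpj.ne_zero
  have hr0 := hpk.ne_zero
  have : NeZero (pi ^ 2 * pj ^ 2 * pk ^ 2) := ⟨by positivity⟩
  have surj : ∀ a : ZMod (pi ^ 2 * pj ^ 2 * pk ^ 2), ∃ (y1 : Fin pi × Fin pi) (y2 : Fin pj × Fin pj)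
      (y3 : Fin pk × Fin pk), (TC.EN y1 y2 y3 : ZMod (pi ^ 2 * pj ^ 2 * pk ^ 2)) = a := by
    intro a
    obtain ⟨y, hy⟩ := (TC.EN_bij hp0 hq0 hr0 hpq hpr hqr).2 a
    exact ⟨y.1, y.2.1, y.2.2, hy⟩
  have i1 : ∀ (C : Finset (ZMod (pi ^ 2 * pj ^ 2 * pk ^ 2))) (y1 : Fin pi × Fin pi)
      (y2 : Fin pj × Fin pj) (y3 : Fin pk × Fin pk),
      (if (TC.EN y1 y2 y3 : ZMod (pi ^ 2 * pj ^ 2 * pk ^ 2)) ∈ C then (1 : ℤ) else 0) = 1 ↔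
      (TC.EN y1 y2 y3 : ZMod (pi ^ 2 * pj ^ 2 * pk ^ 2)) ∈ C := by
    intro C y1 y2 y3
    split_ifs with h <;> simp [h]
  have fibI : ∀ (y1 : Fin pi × Fin pi) (y2 : Fin pj × Fin pj) (y3 : Fin pk × Fin pk),
      (TC.EN y1 y2 y3 : ZMod (pi ^ 2 * pj ^ 2 * pk ^ 2)) ∈ I ↔
      ∀ h, (TC.EN (y1.1, h) y2 y3 : ZMod (pi ^ 2 * pj ^ 2 * pk ^ 2)) ∈ A := by
    intro y1 y2 y3
    rw [hI]
    constructor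
    · intro h k
      exact h.2 ((TC.grid1 hp0 hpq hpr hqr _ _ _ _ _ _).2 ⟨rfl, rfl, rfl⟩)
    · intro h
      refine ⟨h y1.2, ?_⟩
      intro a ha
      obtain ⟨z1, z2, z3, rfl⟩ := surj a
      obtain ⟨e1, rfl, rfl⟩ := (TC.grid1 hp0 hpq hpr hqr _ _ _ _ _ _).1 ha
      have := h z1.2
      rw [e1] at this
      exact this
  have fibJ : ∀ (y1 : Fin pi × Fin pi) (y2 : Fin pj × Fin pj) (y3 : Fin pk × Fin pk),
      (TC.EN y1 y2 y3 : ZMod (pi ^ 2 * pj ^ 2 * pk ^ 2)) ∈ J ↔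
      ∀ h, (TC.EN y1 (y2.1, h) y3 : ZMod (pi ^ 2 * pj ^ 2 * pk ^ 2)) ∈ A := by
    intro y1 y2 y3
    rw [hJ]
    constructor
    · intro h k
      exact h.2 ((TC.grid2 hq0 hpq hpr hqr _ _ _ _ _ _).2 ⟨rfl, rfl, rfl⟩)
    · intro h
      refine ⟨h y2.2, ?_⟩
      intro a ha
      obtain ⟨z1, z2, z3, rfl⟩ := surj a
      obtain ⟨rfl, e1, rfl⟩ := (TC.grid2 hq0 hpq hpr hqr _ _ _ _ _ _).1 ha
      have := h z2.2
      rw [e1] at this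
      exact this
  have fibK : ∀ (y1 : Fin pi × Fin pi) (y2 : Fin pj × Fin pj) (y3 : Fin pk × Fin pk),
      (TC.EN y1 y2 y3 : ZMod (pi ^ 2 * pj ^ 2 * pk ^ 2)) ∈ K ↔
      ∀ h, (TC.EN y1 y2 (y3.1, h) : ZMod (pi ^ 2 * pj ^ 2 * pk ^ 2)) ∈ A := by
    intro y1 y2 y3
    rw [hK]
    constructor
    · intro h k
      exact h.2 ((TC.grid3 hr0 hpq hpr hqr _ _ _ _ _ _).2 ⟨rfl, rfl, rfl⟩)
    · intro h
      refine ⟨h y3.2, ?_⟩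
      intro a ha
      obtain ⟨z1, z2, z3, rfl⟩ := surj a
      obtain ⟨rfl, rfl, e1⟩ := (TC.grid3 hr0 hpq hpr hqr _ _ _ _ _ _).1 ha
      have := h z3.2
      rw [e1] at this
      exact this
  have card_eq : ∀ C : Finset (ZMod (pi ^ 2 * pj ^ 2 * pk ^ 2)), C.card = pi * pj * pk →
      ∑ y1 : Fin pi × Fin pi, ∑ y2 : Fin pj × Fin pj, ∑ y3 : Fin pk × Fin pk,
      (if (TC.EN y1 y2 y3 : ZMod (pi ^ 2 * pj ^ 2 * pk ^ 2)) ∈ C then (1 : ℤ) else 0) =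
      (Fintype.card (Fin pi) : ℤ) * Fintype.card (Fin pj) * Fintype.card (Fin pk) := by
    intro C hC
    have h := TC.sum_EN hp0 hq0 hr0 hpq hpr hqr C (fun _ _ _ => (1 : ℤ)) (fun _ => 1)
      (fun _ _ _ => rfl)
    simp only [one_mul] at h
    rw [h]
    simp [hC]
  have zo : ∀ (C : Finset (ZMod (pi ^ 2 * pj ^ 2 * pk ^ 2))) (y1 : Fin pi × Fin pi)
      (y2 : Fin pj × Fin pj) (y3 : Fin pk × Fin pk),
      (if (TC.EN y1 y2 y3 : ZMod (pi ^ 2 * pj ^ 2 * pk ^ 2)) ∈ C then (1 : ℤ) else 0) = 0 ∨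
      (if (TC.EN y1 y2 y3 : ZMod (pi ^ 2 * pj ^ 2 * pk ^ 2)) ∈ C then (1 : ℤ) else 0) = 1 := by
    intro C y1 y2 y3
    split_ifs <;> simp
  refine TC.Cfg.main (P := Fin pi) (Q := Fin pj) (R := Fin pk)
    (A := fun y1 y2 y3 =>
      if (TC.EN y1 y2 y3 : ZMod (pi ^ 2 * pj ^ 2 * pk ^ 2)) ∈ A then (1 : ℤ) else 0)
    (B := fun y1 y2 y3 =>
      if (TC.EN y1 y2 y3 : ZMod (pi ^ 2 * pj ^ 2 * pk ^ 2)) ∈ B then (1 : ℤ) else 0)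
    { A01 := zo A
      B01 := zo B
      cA := card_eq A hcardA
      cB := card_eq B hcardB
      pP := by rwa [Fintype.card_fin]
      pQ := by rwa [Fintype.card_fin]
      pR := by rwa [Fintype.card_fin]
      p3 := by rw [Fintype.card_fin]; exact three hpi hoi
      q3 := by rw [Fintype.card_fin]; exact three hpj hoj
      r3 := by rw [Fintype.card_fin]; exact three hpk hok
      pq := by simpa using hij
      pr := by simpa using hik
      qr := by simpa using hjk
      dv := ?_
      zr := ?_
      gt := ?_
      dIJ := ?_
      dIK := ?_
      dJK := ?_
      nI := ?_
      nJ := ?_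
      nK := ?_ }
  · intro y1 y2 y3 y1' y2' y3' z1 z2 z3 z1' z2' z3' a1 a2 a3 a4 r1 r2 r3
    refine TC.dv_of hpi hpj hpk hpq hpr hqr A B htile ?_ y1 y1' z1 z1' y2 y2' z2 z2' y3 y3' z3 z3'
      ((i1 _ _ _ _).1 a1) ((i1 _ _ _ _).1 a2) ((i1 _ _ _ _).1 a3) ((i1 _ _ _ _).1 a4) r1 r2 r3
    rw [hcardA, hcardB]
    ring
  · intro s1 s2 s3 h1 h2 h3 hs
    rcases TC.evalM A B htile (n := pi ^ s1 * pj ^ s2 * pk ^ s3)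
      (mul_dvd_mul (mul_dvd_mul (pow_dvd_pow _ h1) (pow_dvd_pow _ h2)) (pow_dvd_pow _ h3))
      (by
        intro h
        simp only [mul_eq_one, Nat.pow_eq_one, hpi.ne_one, hpj.ne_one,
          hpk.ne_one, false_or] at h
        omega) with h | h
    · exact Or.inl (TC.zr_of hpi hpj hpk hpq hpr hqr A h1 h2 h3 h)
    · exact Or.inr (TC.zr_of hpi hpj hpk hpq hpr hqr B h1 h2 h3 h)
  · intro x1 x2 x3
    simp only [i1]
    by_cases hex : ∃ h1 h2 h3,
      (TC.EN (x1, h1) (x2, h2) (x3, h3) : ZMod (pi ^ 2 * pj ^ 2 * pk ^ 2)) ∈ A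
    · obtain ⟨g1, g2, g3, hg⟩ := hex
      rcases hfib _ hg with h | h | h
      · refine Or.inl fun h1 h2 h3 ha k => ?_
        exact (h _ ⟨ha, (TC.gridD hpq hpr hqr _ _ _ _ _ _).2 ⟨rfl, rfl, rfl⟩⟩
          ((TC.grid1 hp0 hpq hpr hqr (x1, h1) (x1, k) _ _ _ _).2 ⟨rfl, rfl, rfl⟩)).1
      · refine Or.inr (Or.inl fun h1 h2 h3 ha k => ?_)
        exact (h _ ⟨ha, (TC.gridD hpq hpr hqr _ _ _ _ _ _).2 ⟨rfl, rfl, rfl⟩⟩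
          ((TC.grid2 hq0 hpq hpr hqr _ _ (x2, h2) (x2, k) _ _).2 ⟨rfl, rfl, rfl⟩)).1
      · refine Or.inr (Or.inr fun h1 h2 h3 ha k => ?_)
        exact (h _ ⟨ha, (TC.gridD hpq hpr hqr _ _ _ _ _ _).2 ⟨rfl, rfl, rfl⟩⟩
          ((TC.grid3 hr0 hpq hpr hqr _ _ _ _ (x3, h3) (x3, k)).2 ⟨rfl, rfl, rfl⟩)).1
    · exact Or.inl fun h1 h2 h3 ha => absurd ⟨h1, h2, h3, ha⟩ hex
  · intro y1 y2 y3
    simp only [i1]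
    rintro ⟨h1, h2⟩
    exact Set.disjoint_left.1 hIJ ((fibI y1 y2 y3).2 h1) ((fibJ y1 y2 y3).2 h2)
  · intro y1 y2 y3
    simp only [i1]
    rintro ⟨h1, h2⟩
    exact Set.disjoint_left.1 hIK ((fibI y1 y2 y3).2 h1) ((fibK y1 y2 y3).2 h2)
  · intro y1 y2 y3
    simp only [i1]
    rintro ⟨h1, h2⟩
    exact Set.disjoint_left.1 hJK ((fibJ y1 y2 y3).2 h1) ((fibK y1 y2 y3).2 h2)
  · obtain ⟨a, ha⟩ := neI
    obtain ⟨y1, y2, y3, rfl⟩ := surj a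
    simp only [i1]
    exact ⟨_, _, _, (fibI y1 y2 y3).1 ha⟩
  · obtain ⟨a, ha⟩ := neJ
    obtain ⟨y1, y2, y3, rfl⟩ := surj a
    simp only [i1]
    exact ⟨_, _, _, (fibJ y1 y2 y3).1 ha⟩
  · obtain ⟨a, ha⟩ := neK
    obtain ⟨y1, y2, y3, rfl⟩ := surj a
    simp only [i1]
    exact ⟨_, _, _, (fibK y1 y2 y3).1 ha⟩
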